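/- The measure σ is a graph measure arising from powers of T if and only if there exists n₀ such that for each n ≥ n₀, all substantial n-crossings are synchronized. -/

import Mathlib

/-!
Write `x = (x_1, …, x_d)` for the typical point, whose orbit is `o`; so `o j i = T^j x_i`.

**Graph measures have synchronized crossings.** If `σ` is carried by the graph of
`(T^{e_1}, …, T^{e_d})`, then every box containing `x` has positive measure, hence meets this
graph, and comparing positions in high towers gives `x_i = T^{e_i - e_0} x_0` (`offset_of_graph`).
When `n` is large, an `n`-crossing with at least `η h_n` elements is longer than all these
offsets, so it meets its own translates and all the `t_n` agree on it (`sync_of_offset`).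

**Synchronized crossings put the coordinates on one orbit.** An interval of length `h_n / (8 d)`
close to `0` on which all the `t_n(T^j x_i)` are constant extends to a substantial crossing, so the
hypothesis makes these constants equal (`syncAt_of_substantial`). Call the position of `x` in tower
`n` *good* if all the coordinates stay in their current occurrence of tower `n` during a common
interval of this length ending, or starting, at `0` (`GoodAt`).

* In a good position the coordinates are in the same subcolumn, and then their position in tower
  `n + 1` is good as well. By induction this lasts forever (`sync_forever`), so the differences of
  the positions are constant (`offset_const`) and `x_i = T^{E_i} x_{i_0}` for fixed `E_i`, with
  `E_i ≥ 0` if `i_0` is chosen with the lowest position.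
* If the position is not good, some coordinate is close to the top of tower `n`. By the pigeonhole
  principle (`exists_free_block`) there are intervals of length `h_n / (8 d)` on the left and on the
  right of `0` where no coordinate changes occurrence: for levels between two consecutive
  `n_ℓ` at most two steps separate consecutive occurrences of the tower. Synchronization on both
  sides shows that the coordinates split between a subcolumn `c` and the cyclically next one, and
  if `c ≠ 3` the position in tower `n + 1` is good. With `c = 3`, coordinates high in tower `n` are
  in its third subcolumn, and those low in it are in its first one, a dichotomy which then
  reproduces itself in tower `n + 1` (`two_sides`). Going on up to `n_ℓ`, each coordinate would be
  in the very first or in the very last occurrence inside tower `n_ℓ`, which `X_∞` forbids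
  (`exists_good`).

**Coordinates on one orbit give a graph measure.** A box not visited by the orbit of `x` is
`σ`-null by typicality (`null_box`), so `σ` is carried by the set `y_i = T^{E_i} y_{i_0}`. Its image
under `y ↦ y_{i_0}` is `T`-invariant, hence gives the same mass to all levels of a tower; this mass
is divided by `3` from one tower to the next, so the image is a finite multiple of `μ`
(`invariant_eq`), and `σ` is a graph measure (`graph_of_offsets`).
-/

open MeasureTheory Set Filter Topology
open scoped ENNReal
open scoped Classical

noncomputable section

/-! ## The nearly finite Chacon transformation: symbolic model -/

/-- The alphabet `{*} ∪ ℕ` is modelled by `Option ℕ`, `none` playing the role of `*`. -/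
instance optionNatTop : TopologicalSpace (Option ℕ) := ⊥

/-- The data of the two sequences `(n_ℓ)` and `(ℓ_k)` used in the construction of the
nearly finite Chacon transformation, together with the growth conditions imposed on them. -/
structure NFCseq where
  nseq : ℕ → ℕ
  lseq : ℕ → ℕ
  nseq_zero : nseq 0 = 0
  lseq_zero : lseq 0 = 1
  lseq_strictMono : StrictMono lseq
  nseq_growth : ∀ ℓ : ℕ, 1 ≤ ℓ → nseq (ℓ - 1) + 2 * ℓ < nseq ℓ
  lseq_growth : ∀ k : ℕ, (2 : ℝ) ≤ (1 + ((7 : ℝ) ^ k)⁻¹) ^ (lseq (k + 1) - lseq k)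

namespace NFCseq

/-- `k(ℓ)`: the unique `k` with `ℓ_k ≤ ℓ < ℓ_{k+1}`. -/
def kOf (P : NFCseq) (ℓ : ℕ) : ℕ := sSup {k | P.lseq k ≤ ℓ}

/-- The heights `h_n` of the towers. -/
def hgt (P : NFCseq) : ℕ → ℕ
  | 0 => 1
  | n + 1 =>
    3 * P.hgt n +
      3 * (if hn : ∃ ℓ, 1 ≤ ℓ ∧ P.nseq ℓ = n then P.hgt (n - P.kOf (Nat.find hn)) else 0) + 1
termination_by n => n
decreasing_by all_goals omega

theorem hgt_pos (P : NFCseq) (n : ℕ) : 0 < P.hgt n := by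
  cases n with
  | zero => simp [hgt]
  | succ n => rw [hgt]; omega

/-- The number of spacers put above the first subcolumn at step `n+1`
(`h_{n-k(ℓ)}` if `n = n_ℓ`, and `0` otherwise). -/
def spa (P : NFCseq) (n : ℕ) : ℕ :=
  if hn : ∃ ℓ, 1 ≤ ℓ ∧ P.nseq ℓ = n then P.hgt (n - P.kOf (Nat.find hn)) else 0

/-- The map `p_n` sending the index of a level of tower `n+1` to the index of the level of
tower `n` containing it (`none` if that level lies outside tower `n`). -/
def pmap (P : NFCseq) (n j : ℕ) : Option ℕ :=
  if j < P.hgt n then some j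
  else if j < P.hgt n + P.spa n then none
  else if j < 2 * P.hgt n + P.spa n then some (j - (P.hgt n + P.spa n))
  else if j < 2 * P.hgt n + 2 * P.spa n + 1 then none
  else if j < 3 * P.hgt n + 2 * P.spa n + 1 then some (j - (2 * P.hgt n + 2 * P.spa n + 1))
  else none

/-- The defining property of points of the space `X`. -/
def Xspec (P : NFCseq) (x : ℕ → Option ℕ) : Prop :=
  (∀ n, x n = (x (n + 1)).bind (P.pmap n)) ∧ ∃ n, x n ≠ none

/-- The space `X` of the symbolic model, with its product (subspace) topology. -/
abbrev Xpt (P : NFCseq) : Type := {x : ℕ → Option ℕ // P.Xspec x}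

instance (P : NFCseq) : MeasurableSpace P.Xpt := borel _

/-- `L_n^j`, the `j`-th level of tower `n`. -/
def level (P : NFCseq) (n j : ℕ) : Set P.Xpt := {x | x.1 n = some j}

/-- `C_n`, the union of all levels of tower `n`. -/
def tower (P : NFCseq) (n : ℕ) : Set P.Xpt := {x | x.1 n ≠ none}

theorem pmap_zero (P : NFCseq) (n : ℕ) : P.pmap n 0 = some 0 := by
  unfold pmap
  simp [P.hgt_pos n]

/-- The point `𝟎 = (0,0,…)`. -/
def zeroPt (P : NFCseq) : P.Xpt :=
  ⟨fun _ => some 0, fun n => by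
    show some 0 = (some 0).bind (P.pmap n)
    simp [P.pmap_zero n], 0, by simp⟩

/-- `t_n(x) ∈ {1,2,3}`: the subcolumn of tower `n` to which `x` belongs
(junk value `0` if `x` is not in tower `n+1`). -/
def tcol (P : NFCseq) (n : ℕ) (x : P.Xpt) : ℕ :=
  match x.1 (n + 1) with
  | none => 0
  | some j =>
    if j < P.hgt n + P.spa n then 1
    else if j < 2 * P.hgt n + 2 * P.spa n + 1 then 2
    else 3

/-- The index (from `0` to `3^(m-n) - 1`, ordered from bottom to top of tower `m`) of the
occurrence of tower `n` inside tower `m` to which `x` belongs. -/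
def occIdx (P : NFCseq) (n m : ℕ) (x : P.Xpt) : ℕ :=
  ∑ r ∈ Finset.Ico n m, (P.tcol r x - 1) * 3 ^ (r - n)

/-- `x` belongs to one of the first hundred occurrences of tower `n` inside tower `m`. -/
def inFirstHundred (P : NFCseq) (n m : ℕ) (x : P.Xpt) : Prop := P.occIdx n m x < 100

/-- `x` belongs to one of the last hundred occurrences of tower `n` inside tower `m`. -/
def inLastHundred (P : NFCseq) (n m : ℕ) (x : P.Xpt) : Prop :=
  3 ^ (m - n) ≤ P.occIdx n m x + 100

end NFCseq

/-- The nearly finite Chacon transformation `T` together with its invariant measure `μ`. -/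
structure NFC extends NFCseq where
  T : toNFCseq.Xpt → toNFCseq.Xpt
  μ : Measure toNFCseq.Xpt
  T_inj : Function.Injective T
  T_range : Set.range T = {toNFCseq.zeroPt}ᶜ
  T_up : ∀ x : toNFCseq.Xpt, ∃ N : ℕ, ∀ n, N ≤ n →
    ∃ j : ℕ, x.1 n = some j ∧ (T x).1 n = some (j + 1)
  T_meas : Measurable T
  μ_level : ∀ n j : ℕ, j < toNFCseq.hgt n →
    μ (toNFCseq.level n j) = (3 : ℝ≥0∞)⁻¹ ^ n
  μ_pres : MeasurePreserving T μ μ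
  μ_sfin : SigmaFinite μ

namespace NFC

/-- `X^d`. -/
abbrev Xd (S : NFC) (d : ℕ) : Type := Fin d → S.toNFCseq.Xpt

/-- The Cartesian power `T^{×d}`. -/
def Td (S : NFC) (d : ℕ) : S.Xd d → S.Xd d := fun y i => S.T (y i)

/-- `C_n^d`. -/
def towerD (S : NFC) (d n : ℕ) : Set (S.Xd d) := {y | ∀ i, y i ∈ S.toNFCseq.tower n}

/-- `B` is an `n`-box. -/
def IsNBox (S : NFC) (d n : ℕ) (B : Set (S.Xd d)) : Prop :=
  ∃ v : Fin d → ℕ, (∀ i, v i < S.toNFCseq.hgt n) ∧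
    B = {y : S.Xd d | ∀ i, y i ∈ S.toNFCseq.level n (v i)}

/-- A measure on `X^d` is Radon iff it is finite on each `C_n^d`. -/
def IsRadon (S : NFC) (d : ℕ) (σ : Measure (S.Xd d)) : Prop :=
  ∀ n, σ (S.towerD d n) < ⊤

/-- `σ` is `T^{×d}`-invariant. -/
def InvariantD (S : NFC) (d : ℕ) (σ : Measure (S.Xd d)) : Prop :=
  ∀ A : Set (S.Xd d), MeasurableSet A → σ ((S.Td d) ⁻¹' A) = σ A

/-- `T^{-e} A`, the preimage of `A` under `T^e` for `e ∈ ℤ` (image for negative `e`). -/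
def preT (S : NFC) : ℤ → Set S.toNFCseq.Xpt → Set S.toNFCseq.Xpt
  | Int.ofNat k, A => S.T^[k] ⁻¹' A
  | Int.negSucc k, A => S.T^[k + 1] '' A

/-- `σ` is a graph measure arising from powers of `T` on `X^ι`:
`σ(∏ᵢ Aᵢ) = α · μ(⋂ᵢ T^{-eᵢ} Aᵢ)`. -/
def IsGraphMeasure (S : NFC) {ι : Type} (σ : Measure (ι → S.toNFCseq.Xpt)) : Prop :=
  ∃ α : ℝ≥0∞, 0 < α ∧ α ≠ ⊤ ∧ ∃ e : ι → ℤ,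
    ∀ A : ι → Set S.toNFCseq.Xpt, (∀ i, MeasurableSet (A i)) →
      σ (Set.univ.pi A) = α * S.μ (⋂ i, S.preT (e i) (A i))

/-- `σ = σ^{D_1} ⊗ ⋯ ⊗ σ^{D_r}` for a partition `D_1, …, D_r` of `{1,…,d}` where each
`σ^{D_j}` is a graph measure on `X^{D_j}` arising from powers of `T`. -/
def IsProductOfGraphMeasures (S : NFC) (d : ℕ) (σ : Measure (S.Xd d)) : Prop :=
  ∃ (r : ℕ) (D : Fin r → Finset (Fin d)),
    (∀ j, (D j).Nonempty) ∧
    (∀ j j', j ≠ j' → Disjoint (D j) (D j')) ∧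
    (∀ i : Fin d, ∃ j, i ∈ D j) ∧
    ∃ σD : ∀ j : Fin r, Measure ({i // i ∈ D j} → S.toNFCseq.Xpt),
      (∀ j, S.IsGraphMeasure (σD j)) ∧
      ∀ A : Fin d → Set S.toNFCseq.Xpt, (∀ i, MeasurableSet (A i)) →
        σ (Set.univ.pi A) =
          ∏ j : Fin r, σD j (Set.univ.pi fun i : {i // i ∈ D j} => A i.1)

end NFC


/-- `(T)^j W` for `j ∈ ℤ`: forward images for `j ≥ 0`, preimages for `j < 0`. -/
def iterZ {α : Type*} (f : α → α) : ℤ → Set α → Set α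
  | Int.ofNat k, A => f^[k] '' A
  | Int.negSucc k, A => f^[k + 1] ⁻¹' A

namespace NFC

/-- `σ` is totally dissipative: there is a wandering set `W` whose `ℤ`-orbit covers
`X^d` up to a `σ`-null set. -/
def TotallyDissipative (S : NFC) (d : ℕ) (σ : Measure (S.Xd d)) : Prop :=
  ∃ W : Set (S.Xd d), MeasurableSet W ∧
    (∀ j j' : ℤ, j ≠ j' → Disjoint (iterZ (S.Td d) j W) (iterZ (S.Td d) j' W)) ∧
    σ (⋃ j : ℤ, iterZ (S.Td d) j W)ᶜ = 0

/-- The ring `𝓡` of finite unions of `n`-boxes. -/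
def BoxRing (S : NFC) (d : ℕ) : Set (Set (S.Xd d)) :=
  {B | ∃ n : ℕ, ∃ 𝔅 : Finset (Set (S.Xd d)), (∀ b ∈ 𝔅, S.IsNBox d n b) ∧ B = ⋃₀ ↑𝔅}

/-- Convergence of a sequence of Radon measures on `X^d`. -/
def RTendsto (S : NFC) (d : ℕ) (σk : ℕ → Measure (S.Xd d)) (σ : Measure (S.Xd d)) : Prop :=
  ∀ n : ℕ, 0 < σ (S.towerD d n) →
    (∀ᶠ k in atTop, 0 < σk k (S.towerD d n)) ∧
    ∀ B : Set (S.Xd d), S.IsNBox d n B →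
      Tendsto (fun k => σk k B / σk k (S.towerD d n)) atTop
        (𝓝 (σ B / σ (S.towerD d n)))

/-- The edge `∂C_n^d` of `C_n^d`. -/
def edgeD (S : NFC) (d n : ℕ) : Set (S.Xd d) :=
  {y | y ∈ S.towerD d n ∧ ∃ i, y i ∈ S.toNFCseq.level n 0 ∨
    y i ∈ S.toNFCseq.level n (S.toNFCseq.hgt n - 1)}

/-- `Ω_m`: the union of all `m`-boxes `L_m^{j_1} × ⋯ × L_m^{j_d}` with `j_i ≠ 0` for all `i`. -/
def OmegaD (S : NFC) (d m : ℕ) : Set (S.Xd d) :=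
  {y | ∀ i, ∃ j : ℕ, j ≠ 0 ∧ j < S.toNFCseq.hgt m ∧ y i ∈ S.toNFCseq.level m j}

/-- A twisting transformation on `X^d`: it applies `T` to the coordinates in a nonempty
proper subset `G_1 ⊆ {1,…,d}` and the identity to the others. -/
def IsTwist (S : NFC) (d : ℕ) (Sw : S.Xd d → S.Xd d) : Prop :=
  ∃ G : Fin d → Bool, (∃ i, G i = true) ∧ (∃ i, G i = false) ∧
    ∀ (y : S.Xd d) (i : Fin d), Sw y i = if G i then S.T (y i) else y i

/-- The empirical measure `γ_J = ∑_{j ∈ J} δ_{(T^{×d})^j x}` along a two-sided orbit `o`. -/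
def emp (S : NFC) (d : ℕ) (o : ℤ → S.Xd d) (J : Finset ℤ) : Measure (S.Xd d) :=
  ∑ j ∈ J, Measure.dirac (o j)

end NFC

/-- `J` is a (nonempty finite) interval of `ℤ`. -/
def IsIntervalZ (J : Finset ℤ) : Prop := ∃ a b : ℤ, a ≤ b ∧ J = Finset.Icc a b

namespace NFC

/-- `J` is an `n`-crossing for the orbit `o` of a point of `X^d`: a maximal interval on which
the orbit stays in `C_n^d` with all the `t_n(T^j x_i)` constant. -/
def IsCrossing (S : NFC) (d : ℕ) (o : ℤ → S.Xd d) (n : ℕ) (J : Finset ℤ) : Prop :=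
  IsIntervalZ J ∧
  (∀ j ∈ J, o j ∈ S.towerD d n) ∧
  (∀ i : Fin d, ∀ j ∈ J, ∀ j' ∈ J, S.toNFCseq.tcol n (o j i) = S.toNFCseq.tcol n (o j' i)) ∧
  ∀ J' : Finset ℤ, J ⊆ J' → IsIntervalZ J' →
    (∀ j ∈ J', o j ∈ S.towerD d n) →
    (∀ i : Fin d, ∀ j ∈ J', ∀ j' ∈ J', S.toNFCseq.tcol n (o j i) = S.toNFCseq.tcol n (o j' i)) →
    J' = J

/-- An `n`-crossing is synchronized if `t_n(T^j x_1) = ⋯ = t_n(T^j x_d)` on it. -/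
def IsSync (S : NFC) (d : ℕ) (o : ℤ → S.Xd d) (n : ℕ) (J : Finset ℤ) : Prop :=
  ∀ j ∈ J, ∀ i i' : Fin d, S.toNFCseq.tcol n (o j i) = S.toNFCseq.tcol n (o j i')

end NFC

/-- The interval `I_n` of length `h_n` centered at `0`. -/
def Imid (P : NFCseq) (n : ℕ) : Finset ℤ :=
  Finset.Icc (-((P.hgt n / 2 : ℕ) : ℤ)) (-((P.hgt n / 2 : ℕ) : ℤ) + P.hgt n - 1)

namespace NFC

/-- A substantial `n`-crossing: an `n`-crossing whose intersection with `I_n` has at least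
`η·h_n` elements. -/
def IsSubstantial (S : NFC) (d : ℕ) (o : ℤ → S.Xd d) (η : ℝ) (n : ℕ) (J : Finset ℤ) : Prop :=
  S.IsCrossing d o n J ∧ η * S.toNFCseq.hgt n ≤ ((J ∩ Imid S.toNFCseq n).card : ℝ)

/-- `x_i` climbs into tower `n` along the interval `I`. -/
def Climbs (S : NFC) (d : ℕ) (o : ℤ → S.Xd d) (i : Fin d) (n : ℕ) (I : Finset ℤ) : Prop :=
  (∀ j ∈ I, (o j) i ∈ S.toNFCseq.tower n) ∧
  ¬ ∃ j : ℤ, j ∈ I ∧ j + 1 ∈ I ∧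
      (o j) i ∈ S.toNFCseq.level n (S.toNFCseq.hgt n - 1) ∧
      (o (j + 1)) i ∈ S.toNFCseq.level n 0

end NFC

/-- The nearly finite Chacon system together with the conull set `X_∞` and the function
`x ↦ ℓ(x)` of Lemma 2.3. -/
structure NFCX extends NFC where
  Xinf : Set toNFCseq.Xpt
  ellx : toNFCseq.Xpt → ℕ
  Xinf_conull : μ Xinfᶜ = 0
  Xinf_spec : ∀ x ∈ Xinf, ∀ ℓ : ℕ, ellx x ≤ ℓ → ∀ n : ℕ,
    nseq (ℓ - 1) ≤ n → n + ℓ ≤ nseq ℓ →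
      x ∈ toNFCseq.tower n ∧ ¬ toNFCseq.inFirstHundred n (nseq ℓ) x ∧
        ¬ toNFCseq.inLastHundred n (nseq ℓ) x

namespace NFCX

/-- `o` is the two-sided orbit of a `σ`-typical point `x = o 0` (satisfying
conditions (1), (2) and (3) of Section 3.4 of the paper). -/
def IsTypicalOrbit (S : NFCX) (d : ℕ) (σ : Measure (S.toNFC.Xd d))
    (o : ℤ → S.toNFC.Xd d) : Prop :=
  (∀ j : ℤ, S.toNFC.Td d (o j) = o (j + 1)) ∧
  (∀ j : ℤ, ∀ n : ℕ, 0 < σ (S.toNFC.towerD d n) →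
    ∀ B : Set (S.toNFC.Xd d), S.toNFC.IsNBox d n B →
    ∀ a b : ℕ → ℤ, (∀ k, a k ≤ 0) → (∀ k, 0 ≤ b k) →
      Tendsto (fun k => b k - a k) atTop atTop →
      Tendsto (fun k =>
          (((Finset.Icc (a k) (b k)).filter (fun j' => o (j + j') ∈ B)).card : ℝ) /
            (((Finset.Icc (a k) (b k)).filter
              (fun j' => o (j + j') ∈ S.toNFC.towerD d n)).card : ℝ))
        atTop (𝓝 ((σ B).toReal / (σ (S.toNFC.towerD d n)).toReal))) ∧
  (∀ n : ℕ, ∀ B : Set (S.toNFC.Xd d), S.toNFC.IsNBox d n B → o 0 ∈ B → 0 < σ B) ∧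
  (∀ i : Fin d, (o 0) i ∈ S.Xinf)

end NFCX

/-! ## Subsets of `ℤ` of order `ℓ` inside an interval -/

/-- A piece of `F ∩ I`: a maximal interval included in `F ∩ I`. -/
def IsPieceZ (F : Set ℤ) (I : Finset ℤ) (J : Finset ℤ) : Prop :=
  IsIntervalZ J ∧ (↑J : Set ℤ) ⊆ F ∩ ↑I ∧
    ∀ J' : Finset ℤ, IsIntervalZ J' → (↑J' : Set ℤ) ⊆ F ∩ ↑I → J ⊆ J' → J' = J

/-- A hole of `F ∩ I`: a maximal interval included in `I \ F`. -/
def IsHoleZ (F : Set ℤ) (I : Finset ℤ) (J : Finset ℤ) : Prop :=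
  IsIntervalZ J ∧ (↑J : Set ℤ) ⊆ (↑I : Set ℤ) \ F ∧
    ∀ J' : Finset ℤ, IsIntervalZ J' → (↑J' : Set ℤ) ⊆ (↑I : Set ℤ) \ F → J ⊆ J' → J' = J

/-- Each hole of `F ∩ I` has size at most `s`. -/
def HolesSmall (F : Set ℤ) (I : Finset ℤ) (s : ℕ) : Prop :=
  ∀ H : Finset ℤ, IsHoleZ F I H → H.card ≤ s

/-- Two consecutive holes of `F ∩ I` are always separated by a piece of size at least `c`. -/
def HolesSeparated (F : Set ℤ) (I : Finset ℤ) (c : ℕ) : Prop :=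
  ∀ H₁ H₂ : Finset ℤ, IsHoleZ F I H₁ → IsHoleZ F I H₂ →
    (∀ a ∈ H₁, ∀ b ∈ H₂, a < b) →
    ∃ J : Finset ℤ, IsPieceZ F I J ∧ c ≤ J.card ∧ ∀ a ∈ H₁, ∀ b ∈ H₂, ∀ x ∈ J, a < x ∧ x < b

/-- `F` is of order `ℓ ≥ 1` inside the interval `I`, with respect to the sequences `c`, `s`. -/
def IsOrder (c s : ℕ → ℕ) : ℕ → Set ℤ → Finset ℤ → Prop
  | 0, _, _ => False
  | 1, F, I => HolesSmall F I (s 1) ∧ HolesSeparated F I (c 1)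
  | (ℓ + 2), F, I => ∃ F' : Set ℤ, F ⊆ F' ∧ HolesSmall F' I (s (ℓ + 2)) ∧
      HolesSeparated F' I (c (ℓ + 2)) ∧
      ∀ J : Finset ℤ, IsPieceZ F' I J → IsOrder c s (ℓ + 1) F J

/-- `p_1`: the smallest integer such that `3^{p_1} > 2d+1` and `p_1 > d`. -/
def pOne (d : ℕ) : ℕ := sInf {p : ℕ | 2 * d + 1 < 3 ^ p ∧ d < p}

/-- `p_2`: the smallest integer such that `1/3^{p_2} < η/3`. -/
def pTwo (η : ℝ) : ℕ := sInf {p : ℕ | ((3 : ℝ) ^ p)⁻¹ < η / 3}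



/-! ### Points of `X`, subcolumns and orbits -/

namespace NFCseq

theorem hgt_succ (P : NFCseq) (n : ℕ) :
    P.hgt (n + 1) = 3 * P.hgt n + 3 * P.spa n + 1 := by
  rw [hgt]; rfl

theorem hgt_strictMono (P : NFCseq) : StrictMono P.hgt :=
  strictMono_nat_of_lt_succ fun n => by
    have := P.hgt_succ n
    have := P.hgt_pos n
    omega

theorem lt_hgt (P : NFCseq) (n : ℕ) : n < P.hgt n := by
  induction n with
  | zero => exact P.hgt_pos 0
  | succ n ih => have := P.hgt_succ n; omega

theorem spa_le (P : NFCseq) (n : ℕ) : P.spa n ≤ P.hgt n := by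
  unfold spa
  split_ifs with h
  · exact P.hgt_strictMono.monotone (Nat.sub_le _ _)
  · exact Nat.zero_le _

theorem nseq_strictMono (P : NFCseq) : StrictMono P.nseq :=
  strictMono_nat_of_lt_succ fun n => by
    have := P.nseq_growth (n + 1) (by omega)
    simp only [Nat.add_sub_cancel] at this
    omega

theorem spa_eq_zero (P : NFCseq) {l m : ℕ} (h1 : P.nseq l < m) (h2 : m < P.nseq (l + 1)) :
    P.spa m = 0 := by
  unfold spa
  rw [dif_neg]
  rintro ⟨k, -, rfl⟩
  have a := P.nseq_strictMono.lt_iff_lt.1 h1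
  have b := P.nseq_strictMono.lt_iff_lt.1 h2
  omega

theorem pmap_eq_some (P : NFCseq) (n j v : ℕ) :
    P.pmap n j = some v ↔ v < P.hgt n ∧
      (j = v ∨ j = v + P.hgt n + P.spa n ∨ j = v + 2 * P.hgt n + 2 * P.spa n + 1) := by
  unfold pmap
  split_ifs <;> simp only [Option.some.injEq, false_iff] <;> omega

theorem val_succ (P : NFCseq) {x : P.Xpt} {n v : ℕ} (h : x.1 n = some v) :
    ∃ j, x.1 (n + 1) = some j ∧ P.pmap n j = some v := by
  have := x.2.1 n
  rw [h] at this
  exact Option.bind_eq_some_iff.1 this.symm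

theorem val_of_succ (P : NFCseq) {x : P.Xpt} {n j v : ℕ} (h : x.1 (n + 1) = some j)
    (hv : P.pmap n j = some v) : x.1 n = some v := by
  rw [x.2.1 n, h]; exact hv

theorem val_lt (P : NFCseq) {x : P.Xpt} {n v : ℕ} (h : x.1 n = some v) : v < P.hgt n := by
  obtain ⟨j, -, hj⟩ := P.val_succ h
  exact ((P.pmap_eq_some n j v).1 hj).1

theorem ne_none_mono (P : NFCseq) {x : P.Xpt} {n m : ℕ} (h : n ≤ m) (hx : x.1 n ≠ none) :
    x.1 m ≠ none := by
  induction m, h using Nat.le_induction with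
  | base => exact hx
  | succ m _ ih =>
    obtain ⟨v, hv⟩ := Option.ne_none_iff_exists'.1 ih
    obtain ⟨j, hj, -⟩ := P.val_succ hv
    simp [hj]

theorem exists_val (P : NFCseq) (x : P.Xpt) : ∃ N, ∀ n, N ≤ n → ∃ v, x.1 n = some v := by
  obtain ⟨N, hN⟩ := x.2.2
  exact ⟨N, fun n hn => Option.ne_none_iff_exists'.1 (P.ne_none_mono hn hN)⟩

theorem val_congr (P : NFCseq) {x y : P.Xpt} {n m : ℕ} (h : n ≤ m) (hm : x.1 m = y.1 m) :
    x.1 n = y.1 n := by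
  induction m, h using Nat.le_induction with
  | base => exact hm
  | succ m _ ih => exact ih (by rw [x.2.1 m, y.2.1 m, hm])

theorem ext_of_eventually (P : NFCseq) {x y : P.Xpt} {N : ℕ}
    (h : ∀ n, N ≤ n → x.1 n = y.1 n) : x = y :=
  Subtype.ext <| funext fun n =>
    P.val_congr (le_max_left n N) (h _ (le_max_right n N))

/-- The subcolumn `t_n(x)` records how the position of `x` in tower `n + 1` is obtained from
its position in tower `n`. -/
theorem tcol_cases (P : NFCseq) {x : P.Xpt} {n v : ℕ} (h : x.1 n = some v) :
    (P.tcol n x = 1 ∧ x.1 (n + 1) = some v) ∨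
    (P.tcol n x = 2 ∧ x.1 (n + 1) = some (v + P.hgt n + P.spa n)) ∨
    (P.tcol n x = 3 ∧ x.1 (n + 1) = some (v + 2 * P.hgt n + 2 * P.spa n + 1)) := by
  obtain ⟨j, hj, hjv⟩ := P.val_succ h
  obtain ⟨hv, h1⟩ := (P.pmap_eq_some n j v).1 hjv
  unfold tcol
  rw [hj]
  rcases h1 with rfl | rfl | rfl
  · left; simp only [and_true]; rw [if_pos (by omega)]
  · right; left; simp only [and_true]; rw [if_neg (by omega), if_pos (by omega)]
  · right; right; simp only [and_true]; rw [if_neg (by omega), if_neg (by omega)]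

theorem val_one (P : NFCseq) {x : P.Xpt} {n v : ℕ} (h : x.1 (n + 1) = some v)
    (hv : v < P.hgt n) : x.1 n = some v ∧ P.tcol n x = 1 := by
  have h1 := P.val_of_succ h ((P.pmap_eq_some n v v).2 ⟨hv, by omega⟩)
  refine ⟨h1, ?_⟩
  rcases P.tcol_cases h1 with ⟨a, b⟩ | ⟨a, b⟩ | ⟨a, b⟩ <;>
    rw [h, Option.some.injEq] at b <;> omega

theorem val_two (P : NFCseq) {x : P.Xpt} {n v : ℕ}
    (h : x.1 (n + 1) = some (v + P.hgt n + P.spa n))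
    (hv : v < P.hgt n) : x.1 n = some v ∧ P.tcol n x = 2 := by
  have h1 := P.val_of_succ h ((P.pmap_eq_some n _ v).2 ⟨hv, by omega⟩)
  refine ⟨h1, ?_⟩
  rcases P.tcol_cases h1 with ⟨a, b⟩ | ⟨a, b⟩ | ⟨a, b⟩ <;>
    rw [h, Option.some.injEq] at b <;> omega

theorem val_three (P : NFCseq) {x : P.Xpt} {n v : ℕ}
    (h : x.1 (n + 1) = some (v + 2 * P.hgt n + 2 * P.spa n + 1))
    (hv : v < P.hgt n) : x.1 n = some v ∧ P.tcol n x = 3 := by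
  have h1 := P.val_of_succ h ((P.pmap_eq_some n _ v).2 ⟨hv, by omega⟩)
  refine ⟨h1, ?_⟩
  rcases P.tcol_cases h1 with ⟨a, b⟩ | ⟨a, b⟩ | ⟨a, b⟩ <;>
    rw [h, Option.some.injEq] at b <;> omega

end NFCseq

namespace NFC

/-- Inside tower `n`, below its top level, `T` moves points one level up: this holds in a high
tower by definition of `T`, and descends through the maps `p_n`. -/
theorem T_step (S : NFC) {x : S.toNFCseq.Xpt} {n v : ℕ} (h : x.1 n = some v)
    (hv : v + 1 < S.toNFCseq.hgt n) : (S.T x).1 n = some (v + 1) := by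
  obtain ⟨N, hN⟩ := S.T_up x
  suffices H : ∀ k n v, N ≤ n + k → x.1 n = some v → v + 1 < S.toNFCseq.hgt n →
      (S.T x).1 n = some (v + 1) from H N n v (by omega) h hv
  intro k
  induction k with
  | zero =>
    intro n v hn h hv
    obtain ⟨j, hj, hj'⟩ := hN n (by omega)
    rw [h, Option.some.injEq] at hj
    rw [hj', hj]
  | succ k ih =>
    intro n v hn h hv
    obtain ⟨j, hj, hjv⟩ := S.toNFCseq.val_succ h
    have hs := S.toNFCseq.hgt_succ n
    rw [S.toNFCseq.pmap_eq_some] at hjv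
    refine S.toNFCseq.val_of_succ (ih (n + 1) j (by omega) hj (by omega)) ?_
    rw [S.toNFCseq.pmap_eq_some]
    omega

theorem T_back (S : NFC) {x : S.toNFCseq.Xpt} {n v : ℕ} (h : (S.T x).1 n = some (v + 1)) :
    x.1 n = some v := by
  obtain ⟨N, hN⟩ := S.T_up x
  suffices H : ∀ k n v, N ≤ n + k → (S.T x).1 n = some (v + 1) → x.1 n = some v from
    H N n v (by omega) h
  intro k
  induction k with
  | zero =>
    intro n v hn h
    obtain ⟨j, hj, hj'⟩ := hN n (by omega)
    rw [h, Option.some.injEq] at hj'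
    rw [hj]; congr 1; omega
  | succ k ih =>
    intro n v hn h
    obtain ⟨j, hj, hjv⟩ := S.toNFCseq.val_succ h
    rw [S.toNFCseq.pmap_eq_some] at hjv
    obtain ⟨j, rfl⟩ : ∃ j', j = j' + 1 := ⟨j - 1, by omega⟩
    refine S.toNFCseq.val_of_succ (ih (n + 1) j (by omega) hj) ?_
    rw [S.toNFCseq.pmap_eq_some]
    omega

theorem iter_step (S : NFC) {x : S.toNFCseq.Xpt} {n v : ℕ} (h : x.1 n = some v) (k : ℕ)
    (hv : v + k < S.toNFCseq.hgt n) : (S.T^[k] x).1 n = some (v + k) := by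
  induction k with
  | zero => exact h
  | succ k ih =>
    rw [Function.iterate_succ_apply']
    exact S.T_step (ih (by omega)) (by omega)

theorem iter_back (S : NFC) {x : S.toNFCseq.Xpt} {n v : ℕ} (k : ℕ)
    (h : (S.T^[k] x).1 n = some (v + k)) : x.1 n = some v := by
  induction k with
  | zero => exact h
  | succ k ih =>
    rw [Function.iterate_succ_apply'] at h
    exact ih (S.T_back h)

theorem iter_up (S : NFC) (x : S.toNFCseq.Xpt) (k : ℕ) :
    ∃ N, ∀ n, N ≤ n → ∃ j, x.1 n = some j ∧ (S.T^[k] x).1 n = some (j + k) := by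
  induction k with
  | zero =>
    obtain ⟨N, hN⟩ := S.toNFCseq.exists_val x
    exact ⟨N, fun n hn => (hN n hn).imp fun j hj => ⟨hj, hj⟩⟩
  | succ k ih =>
    obtain ⟨N, hN⟩ := ih
    obtain ⟨N', hN'⟩ := S.T_up (S.T^[k] x)
    refine ⟨max N N', fun n hn => ?_⟩
    obtain ⟨j, hj, hjk⟩ := hN n (le_of_max_le_left hn)
    obtain ⟨j', hj', hjk'⟩ := hN' n (le_of_max_le_right hn)
    refine ⟨j, hj, ?_⟩
    rw [hjk, Option.some.injEq] at hj'
    rw [Function.iterate_succ_apply', hjk', ← hj']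
    rfl

/-- `f` is a two-sided orbit of `T`. -/
def IsOrbit (S : NFC) (f : ℤ → S.toNFCseq.Xpt) : Prop := ∀ j, S.T (f j) = f (j + 1)

theorem IsOrbit.iter {S : NFC} {f : ℤ → S.toNFCseq.Xpt} (hf : S.IsOrbit f) (a : ℤ) (k : ℕ) :
    S.T^[k] (f a) = f (a + k) := by
  induction k with
  | zero => simp
  | succ k ih =>
    rw [Function.iterate_succ_apply', ih, hf]
    congr 1; push_cast; ring

theorem IsOrbit.congr {S : NFC} {f g : ℤ → S.toNFCseq.Xpt} (hf : S.IsOrbit f)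
    (hg : S.IsOrbit g) {a b : ℤ} (h : f a = g b) (k : ℤ) : f (a + k) = g (b + k) := by
  obtain ⟨k, rfl | rfl⟩ := k.eq_nat_or_neg
  · rw [← hf.iter, ← hg.iter, h]
  · apply S.T_inj.iterate k
    rw [hf.iter, hg.iter]
    simpa using h

theorem IsOrbit.shift {S : NFC} {f : ℤ → S.toNFCseq.Xpt} (hf : S.IsOrbit f) {a b : ℤ}
    {n u v : ℕ} (hu : (f a).1 n = some u) (hv : v < S.toNFCseq.hgt n)
    (h : (v : ℤ) - u = b - a) : (f b).1 n = some v := by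
  rcases le_total u v with huv | huv
  · obtain ⟨k, rfl⟩ := Nat.exists_eq_add_of_le huv
    have := S.iter_step hu k hv
    rw [hf.iter] at this
    rwa [show b = a + k by push_cast at h; omega]
  · obtain ⟨k, rfl⟩ := Nat.exists_eq_add_of_le huv
    apply S.iter_back k
    rw [hf.iter, show b + k = a by push_cast at h; omega]
    exact hu

theorem IsOrbit.far {S : NFC} {f : ℤ → S.toNFCseq.Xpt} (hf : S.IsOrbit f) (a b : ℤ) :
    ∃ N, ∀ n, N ≤ n → ∃ u v : ℕ, (f a).1 n = some u ∧ (f b).1 n = some v ∧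
      (v : ℤ) - u = b - a := by
  rcases le_total a b with h | h
  · obtain ⟨N, hN⟩ := S.iter_up (f a) (b - a).toNat
    refine ⟨N, fun n hn => ?_⟩
    obtain ⟨j, h1, h2⟩ := hN n hn
    rw [hf.iter, show a + ((b - a).toNat : ℤ) = b by omega] at h2
    exact ⟨_, _, h1, h2, by push_cast; omega⟩
  · obtain ⟨N, hN⟩ := S.iter_up (f b) (a - b).toNat
    refine ⟨N, fun n hn => ?_⟩
    obtain ⟨j, h1, h2⟩ := hN n hn
    rw [hf.iter, show b + ((a - b).toNat : ℤ) = a by omega] at h2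
    exact ⟨_, _, h2, h1, by push_cast; omega⟩

/-- `t_n` does not change while the orbit climbs through one occurrence of tower `n`. -/
theorem IsOrbit.tcol_const {S : NFC} {f : ℤ → S.toNFCseq.Xpt} (hf : S.IsOrbit f) {a b : ℤ}
    {n u v : ℕ} (hu : (f a).1 n = some u) (hv : v < S.toNFCseq.hgt n)
    (h : (v : ℤ) - u = b - a) : S.toNFCseq.tcol n (f b) = S.toNFCseq.tcol n (f a) := by
  have hs := S.toNFCseq.hgt_succ n
  rcases S.toNFCseq.tcol_cases hu with ⟨h1, h2⟩ | ⟨h1, h2⟩ | ⟨h1, h2⟩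
  · rw [h1]
    exact (S.toNFCseq.val_one (hf.shift h2 (v := v) (by omega) h) hv).2
  · rw [h1]
    exact (S.toNFCseq.val_two (hf.shift h2
      (v := v + S.toNFCseq.hgt n + S.toNFCseq.spa n) (by omega) (by push_cast; omega)) hv).2
  · rw [h1]
    exact (S.toNFCseq.val_three (hf.shift h2
      (v := v + 2 * S.toNFCseq.hgt n + 2 * S.toNFCseq.spa n + 1) (by omega)
      (by push_cast; omega)) hv).2

/-- From the top level of tower `n`, the orbit leaves tower `n` or enters another subcolumn. -/
theorem top_change (S : NFC) {x : S.toNFCseq.Xpt} {n v : ℕ}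
    (h : x.1 n = some v) (hv : v + 1 = S.toNFCseq.hgt n) (hT : (S.T x).1 n ≠ none) :
    S.toNFCseq.tcol n (S.T x) ≠ S.toNFCseq.tcol n x := by
  have hs := S.toNFCseq.hgt_succ n
  obtain ⟨w, hw⟩ := Option.ne_none_iff_exists'.1 hT
  have h0 : w = 0 := by
    rcases w with _ | w
    · rfl
    · have := S.T_back hw
      rw [h, Option.some.injEq] at this
      have := S.toNFCseq.val_lt hw
      omega
  subst h0
  intro heq
  rcases S.toNFCseq.tcol_cases h with ⟨h1, h2⟩ | ⟨h1, h2⟩ | ⟨h1, h2⟩ <;>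
  rcases S.toNFCseq.tcol_cases hw with ⟨k1, k2⟩ | ⟨k1, k2⟩ | ⟨k1, k2⟩ <;>
  (try omega)
  · have := S.T_step h2 (by omega)
    rw [k2, Option.some.injEq] at this
    omega
  · have := S.T_step h2 (by omega)
    rw [k2, Option.some.injEq] at this
    omega
  · have := S.T_back (v := 2 * S.toNFCseq.hgt n + 2 * S.toNFCseq.spa n)
      (by rw [k2]; congr 1; omega)
    rw [h2, Option.some.injEq] at this
    omega

/-- On a time interval where the orbit stays in tower `n` with constant `t_n`, it climbs. -/
theorem IsOrbit.climb {S : NFC} {f : ℤ → S.toNFCseq.Xpt} (hf : S.IsOrbit f) {a : ℤ} {n : ℕ}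
    (k : ℕ)
    (hin : ∀ j, a ≤ j → j ≤ a + k → (f j).1 n ≠ none)
    (hc : ∀ j, a ≤ j → j ≤ a + k → S.toNFCseq.tcol n (f j) = S.toNFCseq.tcol n (f a)) :
    ∃ u, (f a).1 n = some u ∧ (f (a + k)).1 n = some (u + k) := by
  induction k with
  | zero =>
    obtain ⟨u, hu⟩ := Option.ne_none_iff_exists'.1 (hin a le_rfl (by omega))
    exact ⟨u, hu, by simpa using hu⟩
  | succ k ih =>
    obtain ⟨u, hu, huk⟩ := ih (fun j h1 h2 => hin j h1 (by push_cast; omega))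
      (fun j h1 h2 => hc j h1 (by push_cast; omega))
    refine ⟨u, hu, ?_⟩
    have hlt := S.toNFCseq.val_lt huk
    have hT : S.T (f (a + k)) = f (a + (k + 1 : ℕ)) := by
      rw [hf]; congr 1; push_cast; ring
    rcases Nat.lt_or_ge (u + k + 1) (S.toNFCseq.hgt n) with h | h
    · rw [← hT]; exact S.T_step huk h
    · exfalso
      apply S.top_change huk (by omega)
      · rw [hT]; exact hin _ (by omega) le_rfl
      · rw [hT]
        exact (hc _ (by omega) le_rfl).trans (hc _ (by omega) (by push_cast; omega)).symm

end NFC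

/-! ### Neighbouring occurrences of a tower -/

namespace NFC

/-- If `f 0` is not in the first occurrence of tower `m` inside tower `m + k + 1`, and no spacers
other than the middle ones are used in between, then the previous occurrence of tower `m` along
the orbit ends at most two steps before the current one begins. -/
theorem IsOrbit.prev {S : NFC} {f : ℤ → S.toNFCseq.Xpt} (hf : S.IsOrbit f) (k : ℕ) :
    ∀ (m u : ℕ), (f 0).1 m = some u → (∀ r, m ≤ r → r ≤ m + k → S.toNFCseq.spa r = 0) →
      S.toNFCseq.tcol (m + k) (f 0) ≠ 1 →
      ∃ g : ℤ, 1 ≤ g ∧ g ≤ 2 ∧ (f (-u - g)).1 m = some (S.toNFCseq.hgt m - 1) := by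
  induction k with
  | zero =>
    intro m u hu hs ht
    have h0 := hs m le_rfl le_rfl
    have hp := S.toNFCseq.hgt_pos m
    have h3 := S.toNFCseq.hgt_succ m
    rw [h0] at h3
    rcases S.toNFCseq.tcol_cases hu with ⟨h1, h2⟩ | ⟨h1, h2⟩ | ⟨h1, h2⟩
    · exact absurd h1 ht
    · refine ⟨1, by omega, by omega, ?_⟩
      refine (S.toNFCseq.val_one (hf.shift h2 ?_ ?_) ?_).1 <;> (try push_cast) <;> omega
    · refine ⟨2, by omega, by omega, ?_⟩
      refine (S.toNFCseq.val_two (hf.shift h2 ?_ ?_) ?_).1 <;> (try push_cast) <;> omega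
  | succ k ih =>
    intro m u hu hs ht
    have h0 := hs m le_rfl (by omega)
    have hp := S.toNFCseq.hgt_pos m
    have h3 := S.toNFCseq.hgt_succ m
    rw [h0] at h3
    rcases S.toNFCseq.tcol_cases hu with ⟨h1, h2⟩ | ⟨h1, h2⟩ | ⟨h1, h2⟩
    · obtain ⟨g, hg1, hg2, hg⟩ := ih (m + 1) u h2 (fun r h h' => hs r (by omega) (by omega))
        (by rwa [show m + 1 + k = m + (k + 1) by omega])
      refine ⟨g, hg1, hg2, (S.toNFCseq.val_three ?_ (by omega)).1⟩
      rw [hg]; congr 1; omega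
    · refine ⟨1, by omega, by omega, ?_⟩
      refine (S.toNFCseq.val_one (hf.shift h2 ?_ ?_) ?_).1 <;> (try push_cast) <;> omega
    · refine ⟨2, by omega, by omega, ?_⟩
      refine (S.toNFCseq.val_two (hf.shift h2 ?_ ?_) ?_).1 <;> (try push_cast) <;> omega

/-- The cyclic successor `1 ↦ 2 ↦ 3 ↦ 1` on subcolumn numbers. -/
def nx (c : ℕ) : ℕ := if c = 3 then 1 else c + 1

/-- If `f 0` is not in the last occurrence of tower `m` inside tower `m + k + 1`, and no spacers
other than the middle ones are used in between, then the next occurrence of tower `m` along the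
orbit begins at most two steps after the current one ends, and in the next subcolumn. -/
theorem IsOrbit.next {S : NFC} {f : ℤ → S.toNFCseq.Xpt} (hf : S.IsOrbit f) (k : ℕ) :
    ∀ (m u : ℕ), (f 0).1 m = some u → (∀ r, m ≤ r → r ≤ m + k → S.toNFCseq.spa r = 0) →
      S.toNFCseq.tcol (m + k) (f 0) ≠ 3 →
      ∃ g : ℤ, 0 ≤ g ∧ g ≤ 1 ∧ (f (S.toNFCseq.hgt m - u + g)).1 m = some 0 ∧
        S.toNFCseq.tcol m (f (S.toNFCseq.hgt m - u + g)) = nx (S.toNFCseq.tcol m (f 0)) := by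
  induction k with
  | zero =>
    intro m u hu hs ht
    have h0 := hs m le_rfl le_rfl
    have hp := S.toNFCseq.hgt_pos m
    have h3 := S.toNFCseq.hgt_succ m
    rw [h0] at h3
    rcases S.toNFCseq.tcol_cases hu with ⟨h1, h2⟩ | ⟨h1, h2⟩ | ⟨h1, h2⟩
    · refine ⟨0, by omega, by omega, ?_⟩
      rw [h1]
      refine S.toNFCseq.val_two (hf.shift h2 ?_ ?_) ?_ <;> (try push_cast) <;> omega
    · refine ⟨1, by omega, by omega, ?_⟩
      rw [h1]
      refine S.toNFCseq.val_three (hf.shift h2 ?_ ?_) ?_ <;> (try push_cast) <;> omega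
    · exact absurd h1 ht
  | succ k ih =>
    intro m u hu hs ht
    have h0 := hs m le_rfl (by omega)
    have hp := S.toNFCseq.hgt_pos m
    have h3 := S.toNFCseq.hgt_succ m
    rw [h0] at h3
    rcases S.toNFCseq.tcol_cases hu with ⟨h1, h2⟩ | ⟨h1, h2⟩ | ⟨h1, h2⟩
    · refine ⟨0, by omega, by omega, ?_⟩
      rw [h1]
      refine S.toNFCseq.val_two (hf.shift h2 ?_ ?_) ?_ <;> (try push_cast) <;> omega
    · refine ⟨1, by omega, by omega, ?_⟩
      rw [h1]
      refine S.toNFCseq.val_three (hf.shift h2 ?_ ?_) ?_ <;> (try push_cast) <;> omega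
    · obtain ⟨g, hg1, hg2, hg, -⟩ := ih (m + 1) _ h2
        (fun r h h' => hs r (by omega) (by omega))
        (by rwa [show m + 1 + k = m + (k + 1) by omega])
      refine ⟨g, hg1, hg2, ?_⟩
      rw [h1]
      rw [show ((S.toNFCseq.hgt (m + 1) : ℕ) : ℤ) -
        ((u + 2 * S.toNFCseq.hgt m + 2 * S.toNFCseq.spa m + 1 : ℕ) : ℤ) + g =
          S.toNFCseq.hgt m - u + g by push_cast; omega] at hg
      exact S.toNFCseq.val_one hg hp

/-- Pigeonhole: among the blocks `[a * w, (a + 1) * w)`, `1 ≤ a ≤ d + 1`, one avoids the `d`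
given points. -/
theorem exists_free_block {d h w : ℕ} (hd : 4 * (d + 2) * w ≤ h)
    (g : Fin d → ℕ) :
    ∃ A : ℕ, w ≤ A ∧ 4 * (A + w) ≤ h ∧ ∀ i, g i < A ∨ A + w ≤ g i := by
  obtain ⟨a, ha, hna⟩ : ∃ a ∈ Finset.Icc 1 (d + 1),
      a ∉ Finset.univ.image fun i => g i / w := by
    by_contra! H
    have h1 := Finset.card_le_card (s := Finset.Icc 1 (d + 1)) H
    have h2 := Finset.card_image_le (s := Finset.univ) (f := fun i => g i / w)
    simp at h1 h2
    omega
  rw [Finset.mem_Icc] at ha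
  refine ⟨a * w, Nat.le_mul_of_pos_left w ha.1, ?_, fun i => ?_⟩
  · have : (a + 1) * w ≤ (d + 2) * w := Nat.mul_le_mul_right w (by omega)
    nlinarith
  · by_contra! H
    refine hna (Finset.mem_image.2 ⟨i, Finset.mem_univ i, ?_⟩)
    exact Nat.div_eq_of_lt_le H.1 (by rw [Nat.succ_mul]; omega)

/-- If, on a time interval of length `w` contained in `[-h_m / 4, h_m / 4]`, all the coordinates
are in tower `m` and never change subcolumn, then they all are in the same subcolumn. -/
def SyncAt (S : NFC) (d : ℕ) (o : ℤ → S.Xd d) (m w : ℕ) : Prop :=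
  ∀ a : ℤ, -(S.toNFCseq.hgt m : ℤ) ≤ 4 * a → 4 * (a + w) ≤ S.toNFCseq.hgt m →
    ∀ c : Fin d → ℕ,
      (∀ j, a ≤ j → j < a + w → ∀ i, (o j i).1 m ≠ none ∧ S.toNFCseq.tcol m (o j i) = c i) →
      ∀ i i', c i = c i'

/-- In a tower of height `h`, the orbit of each coordinate stays in one occurrence of the tower on a
common time interval of length `w`, which ends or starts at `0`; `u i` is the position of the `i`-th
coordinate at time `0`. -/
def GoodAt (h w : ℕ) {d : ℕ} (u : Fin d → ℕ) : Prop :=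
  (∀ i, w ≤ u i + 1) ∨ ∀ i, u i + w ≤ h

theorem sync_of_good (S : NFC) {d : ℕ} {o : ℤ → S.Xd d}
    (ho : ∀ i, S.IsOrbit fun j => o j i) {m w : ℕ} (hw : 0 < w)
    (hwh : 4 * w ≤ S.toNFCseq.hgt m)
    (hS : S.SyncAt d o m w) {u : Fin d → ℕ} (hu : ∀ i, (o 0 i).1 m = some (u i))
    (hG : GoodAt (S.toNFCseq.hgt m) w u) (i i' : Fin d) :
    S.toNFCseq.tcol m (o 0 i) = S.toNFCseq.tcol m (o 0 i') := by
  have key : ∀ (j : ℤ) (i : Fin d), 0 ≤ j + u i → j + u i < S.toNFCseq.hgt m →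
      (o j i).1 m ≠ none ∧ S.toNFCseq.tcol m (o j i) = S.toNFCseq.tcol m (o 0 i) := by
    intro j i h1 h2
    have hv : (j + u i).toNat < S.toNFCseq.hgt m := by omega
    have e : (((j + u i).toNat : ℕ) : ℤ) - u i = j - 0 := by omega
    exact ⟨by rw [(ho i).shift (hu i) hv e]; simp, (ho i).tcol_const (hu i) hv e⟩
  have hlt : ∀ i, u i < S.toNFCseq.hgt m := fun i => S.toNFCseq.val_lt (hu i)
  rcases hG with hG | hG
  · refine hS (-w + 1) (by omega) (by omega) (fun i => S.toNFCseq.tcol m (o 0 i)) ?_ i i'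
    intro j h1 h2 i
    have := hG i; have := hlt i
    exact key j i (by omega) (by omega)
  · refine hS 0 (by omega) (by omega) (fun i => S.toNFCseq.tcol m (o 0 i)) ?_ i i'
    intro j h1 h2 i
    have := hG i; have := hlt i
    exact key j i (by omega) (by omega)

/-- Positions of points in tower `m + 1` whose subcolumns avoid `1` or avoid `3` are good. -/
theorem good_succ (S : NFC) {d : ℕ} {y : S.Xd d} {m w' : ℕ}
    (hm : 1 ≤ m)
    (hw : 16 * w' ≤ S.toNFCseq.hgt (m + 1)) {u u' : Fin d → ℕ}
    (hu : ∀ i, (y i).1 m = some (u i)) (hu' : ∀ i, (y i).1 (m + 1) = some (u' i))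
    (h : (∀ i, S.toNFCseq.tcol m (y i) ≠ 1) ∨ ∀ i, S.toNFCseq.tcol m (y i) ≠ 3) :
    GoodAt (S.toNFCseq.hgt (m + 1)) w' u' := by
  have h3 := S.toNFCseq.hgt_succ m
  have hs := S.toNFCseq.spa_le m
  have hp := S.toNFCseq.lt_hgt m
  rcases h with h | h
  · left
    intro i
    have hi := h i
    rcases S.toNFCseq.tcol_cases (hu i) with ⟨h1, h2⟩ | ⟨h1, h2⟩ | ⟨h1, h2⟩
    · exact absurd h1 hi
    · rw [hu' i, Option.some.injEq] at h2; omega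
    · rw [hu' i, Option.some.injEq] at h2; omega
  · right
    intro i
    have hi := h i
    have := S.toNFCseq.val_lt (hu i)
    rcases S.toNFCseq.tcol_cases (hu i) with ⟨h1, h2⟩ | ⟨h1, h2⟩ | ⟨h1, h2⟩
    · rw [hu' i, Option.some.injEq] at h2; omega
    · rw [hu' i, Option.some.injEq] at h2; omega
    · exact absurd h1 hi

/-- When the position is not good, there is a synchronized crossing on each side of `0`, which
are consecutive for a coordinate close to the top of tower `m`. -/
theorem two_sides (S : NFC) {d : ℕ} {o : ℤ → S.Xd d}
    (ho : ∀ i, S.IsOrbit fun j => o j i) {m w k : ℕ} (hw : 0 < w)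
    (hwh : 4 * (d + 2) * w ≤ S.toNFCseq.hgt m) (hS : S.SyncAt d o m w)
    {u : Fin d → ℕ} (hu : ∀ i, (o 0 i).1 m = some (u i))
    (hG : ¬ GoodAt (S.toNFCseq.hgt m) w u)
    (hspa : ∀ r, m ≤ r → r ≤ m + k → S.toNFCseq.spa r = 0)
    (hprev : ∀ i, 4 * u i < S.toNFCseq.hgt m →
      ∃ k' ≤ k, S.toNFCseq.tcol (m + k') (o 0 i) ≠ 1)
    (hnext : ∀ i, 3 * S.toNFCseq.hgt m < 4 * u i →
      ∃ k' ≤ k, S.toNFCseq.tcol (m + k') (o 0 i) ≠ 3) :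
    ∃ c, ∀ i, (S.toNFCseq.hgt m ≤ 4 * u i → S.toNFCseq.tcol m (o 0 i) = c) ∧
      (4 * u i ≤ 3 * S.toNFCseq.hgt m → S.toNFCseq.tcol m (o 0 i) = nx c) := by
  set h := S.toNFCseq.hgt m with hh
  have hlt : ∀ i, u i < h := fun i => S.toNFCseq.val_lt (hu i)
  have key : ∀ (j : ℤ) (i : Fin d), 0 ≤ j + u i → j + u i < h →
      (o j i).1 m ≠ none ∧ S.toNFCseq.tcol m (o j i) = S.toNFCseq.tcol m (o 0 i) := by
    intro j i h1 h2
    have hv : (j + u i).toNat < S.toNFCseq.hgt m := by omega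
    have e : (((j + u i).toNat : ℕ) : ℤ) - u i = j - 0 := by omega
    exact ⟨by rw [(ho i).shift (hu i) hv e]; simp, (ho i).tcol_const (hu i) hv e⟩
  obtain ⟨i1, hi1⟩ : ∃ i, h < u i + w := by
    by_contra! H
    exact hG (Or.inr H)
  obtain ⟨A, hA1, hA2, hA⟩ := exists_free_block hwh u
  obtain ⟨B, hB1, hB2, hB⟩ := exists_free_block hwh fun i => h - u i
  -- Left of `0`, a coordinate is still in its current occurrence or already in the previous one.
  have hL : ∀ i, ∃ c, (A + w ≤ u i → c = S.toNFCseq.tcol m (o 0 i)) ∧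
      ∀ j : ℤ, -A - w ≤ j → j < -A →
        (o j i).1 m ≠ none ∧ S.toNFCseq.tcol m (o j i) = c := by
    intro i
    have := hlt i
    rcases hA i with hi | hi
    · obtain ⟨k', hk', ht⟩ := hprev i (by omega)
      obtain ⟨g, hg1, hg2, hg⟩ := (ho i).prev k' m (u i) (hu i)
        (fun r h1 h2 => hspa r h1 (by omega)) ht
      refine ⟨S.toNFCseq.tcol m (o (-u i - g) i), fun _ => by omega, fun j h1 h2 => ?_⟩
      have hv : (h - 1 + (j + u i + g)).toNat < S.toNFCseq.hgt m := by omega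
      have e : (((h - 1 + (j + u i + g)).toNat : ℕ) : ℤ) - ((S.toNFCseq.hgt m - 1 : ℕ) : ℤ) =
          j - (-u i - g) := by omega
      exact ⟨by rw [(ho i).shift hg hv e]; simp, (ho i).tcol_const hg hv e⟩
    · exact ⟨_, fun _ => rfl, fun j h1 h2 => key j i (by omega) (by omega)⟩
  have hR : ∀ i, ∃ c, (B + w ≤ h - u i → c = S.toNFCseq.tcol m (o 0 i)) ∧
      (h - u i < B → c = nx (S.toNFCseq.tcol m (o 0 i))) ∧
      ∀ j : ℤ, B ≤ j → j < B + w →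
        (o j i).1 m ≠ none ∧ S.toNFCseq.tcol m (o j i) = c := by
    intro i
    have := hlt i
    rcases hB i with hi | hi
    · obtain ⟨k', hk', ht⟩ := hnext i (by omega)
      obtain ⟨g, hg1, hg2, hg, hgt⟩ := (ho i).next k' m (u i) (hu i)
        (fun r h1 h2 => hspa r h1 (by omega)) ht
      refine ⟨_, fun _ => by omega, fun _ => rfl, fun j h1 h2 => ?_⟩
      rw [← hgt]
      have hv : (j - (h - u i + g)).toNat < S.toNFCseq.hgt m := by omega
      have e : (((j - (h - u i + g)).toNat : ℕ) : ℤ) - ((0 : ℕ) : ℤ) =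
          j - (S.toNFCseq.hgt m - u i + g) := by omega
      exact ⟨by rw [(ho i).shift hg hv e]; simp, (ho i).tcol_const hg hv e⟩
    · exact ⟨_, fun _ => rfl, fun _ => by omega, fun j h1 h2 => key j i (by omega) (by omega)⟩
  choose cL hL1 hL2 using hL
  choose cR hR1 hR2 hR3 using hR
  have sL := hS (-A - w) (by omega) (by omega) cL
    fun j h1 h2 i => hL2 i j h1 (by omega)
  have sR := hS B (by omega) (by omega) cR fun j h1 h2 i => hR3 i j h1 h2
  have e1 := hL1 i1 (by omega)
  have e2 := hR2 i1 (by have := hlt i1; omega)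
  refine ⟨S.toNFCseq.tcol m (o 0 i1), fun i => ⟨fun hi => ?_, fun hi => ?_⟩⟩
  · rw [← hL1 i (by omega), sL i i1, e1]
  · rw [← hR1 i (by have := hlt i; omega), sR i i1, e2]

theorem sum_two_pow (k : ℕ) : ∑ r ∈ Finset.range k, 2 * 3 ^ r + 1 = 3 ^ k := by
  induction k with
  | zero => simp
  | succ k ih => rw [Finset.sum_range_succ]; omega

/-- A point of the first, or of the last, occurrence of tower `n` in tower `M` is excluded by
the condition on the first and last hundred occurrences. -/
theorem not_extreme (P : NFCseq) {n M : ℕ} {x : P.Xpt}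
    (h1 : ¬ P.inFirstHundred n M x) (h2 : ¬ P.inLastHundred n M x) :
    (∃ r, n ≤ r ∧ r < M ∧ P.tcol r x ≠ 1) ∧ ∃ r, n ≤ r ∧ r < M ∧ P.tcol r x ≠ 3 := by
  constructor
  · by_contra! H
    apply h1
    unfold NFCseq.inFirstHundred NFCseq.occIdx
    rw [Finset.sum_eq_zero]
    · norm_num
    · intro r hr
      rw [Finset.mem_Ico] at hr
      rw [H r hr.1 hr.2]; simp
  · by_contra! H
    apply h2
    unfold NFCseq.inLastHundred NFCseq.occIdx
    rw [Finset.sum_congr rfl (g := fun r => 2 * 3 ^ (r - n)) ?_, Finset.sum_Ico_eq_sum_range]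
    · simp only [Nat.add_sub_cancel_left]
      have := sum_two_pow (M - n)
      omega
    · intro r hr
      rw [Finset.mem_Ico] at hr
      rw [H r hr.1 hr.2]

/-- Between two consecutive values `n_{ℓ-1}` and `n_ℓ`, some tower sees the coordinates in a good
position. Otherwise, in all these towers, each coordinate would always be in the first subcolumn
or always in the last one, hence in an extreme occurrence inside tower `n_ℓ`. -/
theorem exists_good (S : NFC) {d : ℕ} {o : ℤ → S.Xd d} (hd : 2 ≤ d)
    (ho : ∀ i, S.IsOrbit fun j => o j i) {n M : ℕ} (hn1 : 1 ≤ n) (hnM : n < M)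
    (hn : 8 * d ≤ S.toNFCseq.hgt n)
    (hS : ∀ m, n ≤ m → S.SyncAt d o m (S.toNFCseq.hgt m / (8 * d)))
    {u : ℕ → Fin d → ℕ} (hu : ∀ m, n ≤ m → ∀ i, (o 0 i).1 m = some (u m i))
    (hspa : ∀ r, n ≤ r → r < M → S.toNFCseq.spa r = 0)
    (h1 : ∀ i, ¬ S.toNFCseq.inFirstHundred n M (o 0 i))
    (h3 : ∀ i, ¬ S.toNFCseq.inLastHundred n M (o 0 i)) :
    ∃ m, n ≤ m ∧ GoodAt (S.toNFCseq.hgt m) (S.toNFCseq.hgt m / (8 * d)) (u m) := by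
  by_contra! H
  have ext := fun i => not_extreme S.toNFCseq (h1 i) (h3 i)
  have P : ∀ m, n ≤ m → m ≤ M → ∀ i,
      (∀ r, n ≤ r → r < m → S.toNFCseq.tcol r (o 0 i) = 1) ∨
      (∀ r, n ≤ r → r < m → S.toNFCseq.tcol r (o 0 i) = 3) := by
    intro m hm
    induction m, hm using Nat.le_induction with
    | base => exact fun _ i => Or.inl fun r h h' => by omega
    | succ m hm ih =>
      intro hmM i
      have ih := ih (by omega)
      have hdm := S.toNFCseq.hgt_strictMono.monotone hm
      have hw : 0 < S.toNFCseq.hgt m / (8 * d) := Nat.div_pos (by omega) (by omega)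
      have hwh : 4 * (d + 2) * (S.toNFCseq.hgt m / (8 * d)) ≤ S.toNFCseq.hgt m :=
        (Nat.mul_le_mul_right _ (by omega)).trans (Nat.mul_div_le _ (8 * d))
      -- The subcolumn used one step before determines which part of tower `m` contains `o 0 i`.
      have low : ∀ i, (∀ r, n ≤ r → r < m → S.toNFCseq.tcol r (o 0 i) = 1) → n < m →
          4 * u m i ≤ S.toNFCseq.hgt m + S.toNFCseq.hgt m := by
        intro i hi hnm
        obtain ⟨m, rfl⟩ : ∃ m', m = m' + 1 := ⟨m - 1, by omega⟩
        have ht := hi m (by omega) (by omega)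
        have hs := S.toNFCseq.hgt_succ m
        have hlt := S.toNFCseq.val_lt (hu m (by omega) i)
        rcases S.toNFCseq.tcol_cases (hu m (by omega) i) with ⟨a, b⟩ | ⟨a, b⟩ | ⟨a, b⟩ <;>
          rw [hu (m + 1) (by omega), Option.some.injEq] at b <;> omega
      have high : ∀ i, (∀ r, n ≤ r → r < m → S.toNFCseq.tcol r (o 0 i) = 3) → n < m →
          S.toNFCseq.hgt m + S.toNFCseq.hgt m ≤ 4 * u m i := by
        intro i hi hnm
        obtain ⟨m, rfl⟩ : ∃ m', m = m' + 1 := ⟨m - 1, by omega⟩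
        have ht := hi m (by omega) (by omega)
        have hs := S.toNFCseq.hgt_succ m
        have hs0 := hspa m (by omega) (by omega)
        have hlt := S.toNFCseq.val_lt (hu m (by omega) i)
        rcases S.toNFCseq.tcol_cases (hu m (by omega) i) with ⟨a, b⟩ | ⟨a, b⟩ | ⟨a, b⟩ <;>
          rw [hu (m + 1) (by omega), Option.some.injEq] at b <;> omega
      have hgt0 := S.toNFCseq.hgt_pos m
      obtain ⟨c, hc⟩ := S.two_sides ho (k := M - 1 - m) hw hwh (hS m hm) (hu m hm) (H m hm)
        (fun r h h' => hspa r (by omega) (by omega))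
        (by
          intro i hi
          have hall : ∀ r, n ≤ r → r < m → S.toNFCseq.tcol r (o 0 i) = 1 := by
            intro r hr hr'
            rcases ih i with h | h
            · exact h r hr hr'
            · have := high i h (by omega); omega
          obtain ⟨⟨r, hr, hr', hne⟩, -⟩ := ext i
          rcases Nat.lt_or_ge r m with hrm | hrm
          · exact absurd (hall r hr hrm) hne
          · exact ⟨r - m, by omega, by rwa [Nat.add_sub_cancel' hrm]⟩)
        (by
          intro i hi
          have hall : ∀ r, n ≤ r → r < m → S.toNFCseq.tcol r (o 0 i) = 3 := by
            intro r hr hr'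
            rcases ih i with h | h
            · have := low i h (by omega); omega
            · exact h r hr hr'
          obtain ⟨-, r, hr, hr', hne⟩ := ext i
          rcases Nat.lt_or_ge r m with hrm | hrm
          · exact absurd (hall r hr hrm) hne
          · exact ⟨r - m, by omega, by rwa [Nat.add_sub_cancel' hrm]⟩)
      -- Every coordinate is in the subcolumn `c` or in the next one.
      have hτ : ∀ i, S.toNFCseq.tcol m (o 0 i) = c ∨ S.toNFCseq.tcol m (o 0 i) = nx c := by
        intro i
        rcases le_total (S.toNFCseq.hgt m) (4 * u m i) with h | h
        · exact Or.inl ((hc i).1 h)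
        · exact Or.inr ((hc i).2 (by omega))
      have c3 : c = 3 := by
        by_contra hc3
        refine H (m + 1) (by omega) (S.good_succ (by omega) ?_ (hu m hm) (hu (m + 1) (by omega)) ?_)
        · exact (Nat.mul_le_mul_right _ (by omega)).trans (Nat.mul_div_le _ (8 * d))
        · have hnx : nx c = c + 1 := if_neg hc3
          by_cases c1 : c ≤ 1
          · right; intro i; have := hτ i; omega
          · left; intro i; have := hτ i
            rcases S.toNFCseq.tcol_cases (hu m hm i) with ⟨a, -⟩ | ⟨a, -⟩ | ⟨a, -⟩ <;> omega
      subst c3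
      have hnx : nx 3 = 1 := if_pos rfl
      rw [hnx] at hτ hc
      rcases Nat.lt_or_ge n m with hnm | hnm
      · rcases ih i with h | h
        · left
          intro r hr hr'
          rcases Nat.lt_or_ge r m with hrm | hrm
          · exact h r hr hrm
          · obtain rfl : r = m := by omega
            exact (hc i).2 (by have := low i h hnm; omega)
        · right
          intro r hr hr'
          rcases Nat.lt_or_ge r m with hrm | hrm
          · exact h r hr hrm
          · obtain rfl : r = m := by omega
            exact (hc i).1 (by have := high i h hnm; omega)
      · rcases hτ i with h | h
        · right
          intro r hr hr'
          obtain rfl : r = m := by omega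
          exact h
        · left
          intro r hr hr'
          obtain rfl : r = m := by omega
          exact h
  obtain ⟨⟨r, a, b, c⟩, ⟨r', a', b', c'⟩⟩ := ext ⟨0, by omega⟩
  rcases P M hnM.le le_rfl ⟨0, by omega⟩ with h | h
  · exact c (h r a b)
  · exact c' (h r' a' b')

/-- Once a good position is reached, the coordinates always belong to the same subcolumn. -/
theorem sync_forever (S : NFC) {d : ℕ} {o : ℤ → S.Xd d} (hd : 2 ≤ d)
    (ho : ∀ i, S.IsOrbit fun j => o j i) {n : ℕ} (hn1 : 1 ≤ n)
    (hn : 8 * d ≤ S.toNFCseq.hgt n)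
    (hS : ∀ m, n ≤ m → S.SyncAt d o m (S.toNFCseq.hgt m / (8 * d)))
    {u : ℕ → Fin d → ℕ} (hu : ∀ m, n ≤ m → ∀ i, (o 0 i).1 m = some (u m i))
    (hG : GoodAt (S.toNFCseq.hgt n) (S.toNFCseq.hgt n / (8 * d)) (u n)) (m : ℕ) (hm : n ≤ m) :
    ∀ i i', S.toNFCseq.tcol m (o 0 i) = S.toNFCseq.tcol m (o 0 i') := by
  have hw : ∀ m, 16 * (S.toNFCseq.hgt m / (8 * d)) ≤ S.toNFCseq.hgt m := fun m =>
    (Nat.mul_le_mul_right _ (by omega)).trans (Nat.mul_div_le _ (8 * d))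
  have key : ∀ m, n ≤ m → GoodAt (S.toNFCseq.hgt m) (S.toNFCseq.hgt m / (8 * d)) (u m) →
      ∀ i i', S.toNFCseq.tcol m (o 0 i) = S.toNFCseq.tcol m (o 0 i') := by
    intro m hm hG
    have hdm := S.toNFCseq.hgt_strictMono.monotone hm
    have := hw m
    exact S.sync_of_good ho (Nat.div_pos (by omega) (by omega)) (by omega) (hS m hm) (hu m hm) hG
  refine key m hm ?_
  induction m, hm using Nat.le_induction with
  | base => exact hG
  | succ m hm ih =>
    refine S.good_succ (by omega) (hw _) (hu m hm) (hu (m + 1) (by omega)) ?_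
    have hc := key m hm ih ⟨0, by omega⟩
    by_cases h : S.toNFCseq.tcol m (o 0 ⟨0, by omega⟩) = 1
    · right; intro i; rw [← hc i, h]; omega
    · left; intro i; rw [← hc i]; exact h

/-- Equal subcolumns in all towers from `n` on keep the position differences constant. -/
theorem offset_const (S : NFC) {d : ℕ} {y : S.Xd d} {n : ℕ} {u : ℕ → Fin d → ℕ}
    (hu : ∀ m, n ≤ m → ∀ i, (y i).1 m = some (u m i))
    (h : ∀ m, n ≤ m → ∀ i i', S.toNFCseq.tcol m (y i) = S.toNFCseq.tcol m (y i'))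
    (m : ℕ) (hm : n ≤ m) (i i' : Fin d) : (u m i : ℤ) - u m i' = u n i - u n i' := by
  induction m, hm using Nat.le_induction with
  | base => rfl
  | succ m hm ih =>
    have hi := hu (m + 1) (by omega) i
    have hi' := hu (m + 1) (by omega) i'
    have := h m hm i i'
    rcases S.toNFCseq.tcol_cases (hu m hm i) with ⟨a, b⟩ | ⟨a, b⟩ | ⟨a, b⟩ <;>
    rcases S.toNFCseq.tcol_cases (hu m hm i') with ⟨a', b'⟩ | ⟨a', b'⟩ | ⟨a', b'⟩ <;>
    rw [hi, Option.some.injEq] at b <;> rw [hi', Option.some.injEq] at b' <;> omega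

end NFC

/-! ### From substantial crossings to synchronization -/

namespace NFC

/-- Any interval of `η * h_n` times near `0` on which all `t_n` are constant extends to a
substantial crossing: such intervals have at most `h_n` elements, so a maximal one exists. -/
theorem syncAt_of_substantial (S : NFC) {d : ℕ} (hd : 2 ≤ d) {o : ℤ → S.Xd d}
    (ho : ∀ i, S.IsOrbit fun j => o j i) {η : ℝ} {n w : ℕ} (hw : 0 < w)
    (hη : η * S.toNFCseq.hgt n ≤ w)
    (H : ∀ J : Finset ℤ, S.IsSubstantial d o η n J → S.IsSync d o n J) :
    S.SyncAt d o n w := by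
  intro a ha1 ha2 c hc
  set W : Finset ℤ := Finset.Icc a (a + w - 1) with hW
  let Q : Finset ℤ → Prop := fun J => IsIntervalZ J ∧ (∀ j ∈ J, o j ∈ S.towerD d n) ∧
    ∀ i : Fin d, ∀ j ∈ J, ∀ j' ∈ J, S.toNFCseq.tcol n (o j i) = S.toNFCseq.tcol n (o j' i)
  have hQW : Q W := by
    refine ⟨⟨a, a + w - 1, by omega, rfl⟩, fun j hj i => ?_, fun i j hj j' hj' => ?_⟩
    · rw [hW, Finset.mem_Icc] at hj
      exact (hc j hj.1 (by omega) i).1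
    · rw [hW, Finset.mem_Icc] at hj hj'
      rw [(hc j hj.1 (by omega) i).2, (hc j' hj'.1 (by omega) i).2]
  have hcard : ∀ J, Q J → J.card ≤ S.toNFCseq.hgt n := by
    rintro J ⟨⟨p, q, hpq, rfl⟩, h1, h2⟩
    let i0 : Fin d := ⟨0, by omega⟩
    obtain ⟨u, -, hu⟩ := (ho i0).climb (a := p) (n := n) (q - p).toNat
      (fun j hj hj' => h1 j (Finset.mem_Icc.2 ⟨hj, by omega⟩) i0)
      (fun j hj hj' => h2 i0 j (Finset.mem_Icc.2 ⟨hj, by omega⟩) p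
        (Finset.mem_Icc.2 ⟨le_rfl, hpq⟩))
    have := S.toNFCseq.val_lt hu
    rw [Int.card_Icc]
    omega
  obtain ⟨J, ⟨hWJ, hQJ, hJc⟩⟩ := Nat.findGreatest_spec
    (P := fun k => ∃ J, W ⊆ J ∧ Q J ∧ J.card = k) (hcard W hQW) ⟨W, subset_rfl, hQW, rfl⟩
  have hcross : S.IsCrossing d o n J := by
    refine ⟨hQJ.1, hQJ.2.1, hQJ.2.2, fun J' hJJ' h1 h2 h3 => ?_⟩
    refine (Finset.eq_of_subset_of_card_le hJJ' ?_).symm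
    rw [hJc]
    exact Nat.le_findGreatest (hcard J' ⟨h1, h2, h3⟩) ⟨J', hWJ.trans hJJ', ⟨h1, h2, h3⟩, rfl⟩
  have hsub : W ⊆ J ∩ Imid S.toNFCseq n := by
    intro j hj
    refine Finset.mem_inter.2 ⟨hWJ hj, ?_⟩
    rw [hW, Finset.mem_Icc] at hj
    rw [Imid, Finset.mem_Icc]
    omega
  have hWc : W.card = w := by rw [hW, Int.card_Icc]; omega
  have hs := H J ⟨hcross, hη.trans (by
    rw [← hWc]; exact_mod_cast Finset.card_le_card hsub)⟩
  intro i i'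
  rw [← (hc a le_rfl (by omega) i).2, ← (hc a le_rfl (by omega) i').2]
  exact hs a (hWJ (by rw [hW, Finset.mem_Icc]; omega)) i i'

/-- If all substantial crossings are synchronized in high towers, the coordinates of `o 0` are
images of one of them by nonnegative powers of `T`. -/
theorem offsets_of_sync (S : NFCX) {d : ℕ} (hd : 2 ≤ d) {η : ℝ}
    (hη1 : η < 1 / (100 * d)) {o : ℤ → S.toNFC.Xd d}
    (ho : ∀ i, S.toNFC.IsOrbit fun j => o j i) (hX : ∀ i, o 0 i ∈ S.Xinf) {N : ℕ}
    (H : ∀ n : ℕ, N ≤ n → ∀ J : Finset ℤ,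
      S.toNFC.IsSubstantial d o η n J → S.toNFC.IsSync d o n J) :
    ∃ (i0 : Fin d) (E : Fin d → ℕ), ∀ i, o 0 i = S.T^[E i] (o 0 i0) := by
  choose Nv hNv using fun i => S.toNFCseq.exists_val (o 0 i)
  -- A stage `ℓ` beyond all thresholds.
  set l := N + 16 * d + ∑ i, Nv i + ∑ i, S.ellx (o 0 i) + 1 with hl
  have hsum1 : ∀ i, Nv i ≤ ∑ i, Nv i := fun i =>
    Finset.single_le_sum (f := Nv) (fun _ _ => Nat.zero_le _) (Finset.mem_univ i)
  have hsum2 : ∀ i, S.ellx (o 0 i) ≤ ∑ i, S.ellx (o 0 i) := fun i =>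
    Finset.single_le_sum (f := fun i => S.ellx (o 0 i)) (fun _ _ => Nat.zero_le _)
      (Finset.mem_univ i)
  have hl1 : l - 1 ≤ S.nseq (l - 1) := S.toNFCseq.nseq_strictMono.le_apply
  have hgr := S.nseq_growth l (by omega)
  set n := S.nseq (l - 1) + 1 with hn
  have hval : ∀ m, n ≤ m → ∀ i, ∃ v, (o 0 i).1 m = some v := fun m hm i =>
    hNv i m (by have := hsum1 i; omega)
  choose! u hu using hval
  have hS : ∀ m, n ≤ m → S.toNFC.SyncAt d o m (S.toNFCseq.hgt m / (8 * d)) := by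
    intro m hm
    have hlt := S.toNFCseq.lt_hgt m
    have hdm : 16 * d ≤ S.toNFCseq.hgt m := by omega
    refine S.toNFC.syncAt_of_substantial hd ho (Nat.div_pos (by omega) (by omega)) ?_
      (H m (by omega))
    have h1 : S.toNFCseq.hgt m ≤ 16 * d * (S.toNFCseq.hgt m / (8 * d)) := by
      have := Nat.div_add_mod (S.toNFCseq.hgt m) (8 * d)
      have := Nat.mod_lt (S.toNFCseq.hgt m) (show 0 < 8 * d by omega)
      nlinarith
    have h1' : (S.toNFCseq.hgt m : ℝ) ≤ 16 * d * ((S.toNFCseq.hgt m / (8 * d) : ℕ) : ℝ) := by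
      exact_mod_cast h1
    have hd0 : (0 : ℝ) < d := by exact_mod_cast (by omega : 0 < d)
    have hw0 : (0 : ℝ) ≤ ((S.toNFCseq.hgt m / (8 * d) : ℕ) : ℝ) := Nat.cast_nonneg _
    rw [lt_div_iff₀ (by positivity)] at hη1
    have hh0 : (0 : ℝ) ≤ S.toNFCseq.hgt m := Nat.cast_nonneg _
    have h2 : η * S.toNFCseq.hgt m * (100 * d) ≤
        100 * d * ((S.toNFCseq.hgt m / (8 * d) : ℕ) : ℝ) := by nlinarith [mul_nonneg hd0.le hw0]
    nlinarith [mul_pos hd0 hd0]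
  have hdn : 8 * d ≤ S.toNFCseq.hgt n := by
    have := S.toNFCseq.lt_hgt n
    omega
  have hspec := fun i => S.Xinf_spec _ (hX i) l (by have := hsum2 i; omega) n (by omega)
    (by omega)
  obtain ⟨m0, hm0, hG⟩ := S.toNFC.exists_good hd ho (M := S.nseq l) (by omega) (by omega) hdn hS
    hu (fun r h1 h2 => S.toNFCseq.spa_eq_zero (l := l - 1) (by omega)
      (by rwa [show l - 1 + 1 = l by omega]))
    (fun i => (hspec i).2.1) (fun i => (hspec i).2.2)
  have hsync := S.toNFC.sync_forever hd ho (n := m0) (by omega)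
    (hdn.trans (S.toNFCseq.hgt_strictMono.monotone hm0)) (fun m hm => hS m (by omega))
    (fun m hm => hu m (by omega)) hG
  have hoff := S.toNFC.offset_const (fun m hm => hu m (le_trans hm0 hm)) hsync
  have : Nonempty (Fin d) := ⟨⟨0, by omega⟩⟩
  obtain ⟨i0, hi0⟩ := Finite.exists_min (u m0)
  refine ⟨i0, fun i => u m0 i - u m0 i0, fun i => ?_⟩
  obtain ⟨N', hN'⟩ := S.toNFC.iter_up (o 0 i0) (u m0 i - u m0 i0)
  refine S.toNFCseq.ext_of_eventually (N := max N' m0) fun m hm => ?_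
  obtain ⟨j, hj, hjE⟩ := hN' m (le_of_max_le_left hm)
  have hm' := le_of_max_le_right hm
  rw [hu m (by omega), Option.some.injEq] at hj
  have h1 := hoff m hm' i i0
  have h2 := hi0 i
  rw [hjE, hu m (by omega)]
  congr 1
  omega

/-! ### Invariant measures on `X` and graph measures -/

theorem measurableSet_level (P : NFCseq) (n j : ℕ) : MeasurableSet (P.level n j) := by
  have : BorelSpace P.Xpt := ⟨rfl⟩
  have : DiscreteTopology (Option ℕ) := ⟨rfl⟩
  have hc : Continuous fun x : P.Xpt => x.1 n :=
    (continuous_apply n).comp continuous_subtype_val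
  have ho : IsOpen (P.level n j) := (isOpen_discrete ({some j} : Set (Option ℕ))).preimage hc
  exact ho.measurableSet

/-- Levels form a basis of the topology of `X`, and there are countably many of them. -/
theorem borel_eq_levels (P : NFCseq) :
    borel P.Xpt = MeasurableSpace.generateFrom (Set.range fun p : ℕ × ℕ => P.level p.1 p.2) := by
  apply le_antisymm
  · refine MeasurableSpace.generateFrom_le fun U hU => ?_
    have hUeq : U = ⋃ p : {p : ℕ × ℕ // P.level p.1 p.2 ⊆ U}, P.level p.1.1 p.1.2 := by
      ext x
      simp only [Set.mem_iUnion, Subtype.exists, exists_prop]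
      refine ⟨fun hx => ?_, fun ⟨p, hp, hxp⟩ => hp hxp⟩
      obtain ⟨V, hV, rfl⟩ := isOpen_induced_iff.1 hU
      obtain ⟨I, w, hI, hIV⟩ := isOpen_pi_iff.1 hV x.1 hx
      obtain ⟨N, hN⟩ := P.exists_val x
      obtain ⟨v, hv⟩ := hN (N + ∑ i ∈ I, i) (by omega)
      refine ⟨(N + ∑ i ∈ I, i, v), fun y hy => hIV fun a ha => ?_, hv⟩
      have ha' : a ≤ N + ∑ i ∈ I, i :=
        le_add_left (Finset.single_le_sum (f := fun i : ℕ => i) (fun _ _ => Nat.zero_le _) ha)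
      rw [P.val_congr (x := y) (y := x) ha' (Eq.trans hy hv.symm)]
      exact (hI a ha).2
    rw [hUeq]
    exact @MeasurableSet.iUnion _ _ (_) _ _ fun p =>
      MeasurableSpace.measurableSet_generateFrom ⟨p.1, rfl⟩
  · refine MeasurableSpace.generateFrom_le ?_
    rintro _ ⟨p, rfl⟩
    exact measurableSet_level P p.1 p.2

theorem isPiSystem_levels (P : NFCseq) :
    IsPiSystem (Set.range fun p : ℕ × ℕ => P.level p.1 p.2) := by
  have key : ∀ n j n' j', n ≤ n' → (P.level n j ∩ P.level n' j').Nonempty →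
      P.level n j ∩ P.level n' j' = P.level n' j' := by
    rintro n j n' j' h ⟨x, hx, hx'⟩
    refine Set.inter_eq_right.2 fun y hy => ?_
    exact (P.val_congr h (Eq.trans hy (Eq.symm hx'))).trans hx
  rintro _ ⟨⟨n, j⟩, rfl⟩ _ ⟨⟨n', j'⟩, rfl⟩ hne
  rcases le_total n n' with h | h
  · exact ⟨(n', j'), (key n j n' j' h hne).symm⟩
  · rw [Set.inter_comm] at hne ⊢
    exact ⟨(n, j), (key n' j' n j h hne).symm⟩

theorem level_empty (P : NFCseq) {n j : ℕ} (h : P.hgt n ≤ j) : P.level n j = ∅ := by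
  ext x
  simp only [Set.mem_empty_iff_false, iff_false]
  intro hx
  have := P.val_lt (v := j) hx
  omega

/-- A `T`-invariant measure giving finite mass to some level is a multiple of `μ`: the levels of
each tower have equal masses, divided by `3` from one tower to the next. -/
theorem invariant_eq (S : NFC) (ν : Measure S.toNFCseq.Xpt)
    (hν : ∀ A, MeasurableSet A → ν (S.T ⁻¹' A) = ν A) {n0 : ℕ}
    (hfin : ν (S.toNFCseq.level n0 0) ≠ ⊤) :
    ν (S.toNFCseq.level 0 0) ≠ ⊤ ∧ ν = ν (S.toNFCseq.level 0 0) • S.μ := by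
  have hlev : ∀ n j, j < S.toNFCseq.hgt n →
      ν (S.toNFCseq.level n j) = ν (S.toNFCseq.level n 0) := by
    intro n j hj
    induction j with
    | zero => rfl
    | succ j ih =>
      rw [← ih (by omega), ← hν _ (measurableSet_level _ n (j + 1))]
      congr 1
      ext x
      exact ⟨fun h => S.T_back h, fun h => S.T_step h hj⟩
  have hthree : ∀ n, ν (S.toNFCseq.level n 0) = 3 * ν (S.toNFCseq.level (n + 1) 0) := by
    intro n
    have hs := S.toNFCseq.hgt_succ n
    have hp := S.toNFCseq.hgt_pos n
    have hun : S.toNFCseq.level n 0 = S.toNFCseq.level (n + 1) 0 ∪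
        S.toNFCseq.level (n + 1) (S.toNFCseq.hgt n + S.toNFCseq.spa n) ∪
        S.toNFCseq.level (n + 1) (2 * S.toNFCseq.hgt n + 2 * S.toNFCseq.spa n + 1) := by
      ext x
      constructor
      · intro hx
        rcases S.toNFCseq.tcol_cases (v := 0) hx with ⟨-, h⟩ | ⟨-, h⟩ | ⟨-, h⟩
        · exact Or.inl (Or.inl h)
        · exact Or.inl (Or.inr (by rw [zero_add] at h; exact h))
        · exact Or.inr (by rw [zero_add] at h; exact h)
      · rintro ((hx | hx) | hx) <;>
          exact S.toNFCseq.val_of_succ hx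
            ((S.toNFCseq.pmap_eq_some _ _ _).2 ⟨hp, by omega⟩)
    have hdisj : ∀ j j', j ≠ j' →
        Disjoint (S.toNFCseq.level (n + 1) j) (S.toNFCseq.level (n + 1) j') := by
      intro j j' hne
      refine Set.disjoint_left.2 fun x hx hx' => hne ?_
      have := Eq.trans (Eq.symm hx) hx'
      exact Option.some.inj this
    rw [hun, measure_union (Set.disjoint_union_left.2 ⟨hdisj _ _ (by omega), hdisj _ _ (by omega)⟩)
      (measurableSet_level _ _ _), measure_union (hdisj _ _ (by omega)) (measurableSet_level _ _ _),
      hlev (n + 1) (S.toNFCseq.hgt n + S.toNFCseq.spa n) (by omega),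
      hlev (n + 1) (2 * _ + 2 * _ + 1) (by omega)]
    ring
  have hpow : ∀ n, ν (S.toNFCseq.level 0 0) = 3 ^ n * ν (S.toNFCseq.level n 0) := by
    intro n
    induction n with
    | zero => simp
    | succ n ih => rw [ih, hthree n, pow_succ, mul_assoc]
  have hα : ν (S.toNFCseq.level 0 0) ≠ ⊤ := by
    rw [hpow n0]
    exact ENNReal.mul_ne_top (by simp) hfin
  have heq : ∀ n j, ν (S.toNFCseq.level n j) =
      (ν (S.toNFCseq.level 0 0) • S.μ) (S.toNFCseq.level n j) := by
    intro n j
    rcases Nat.lt_or_ge j (S.toNFCseq.hgt n) with h | h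
    · rw [hlev n j h, Measure.smul_apply, S.μ_level n j h, smul_eq_mul, hpow n,
        mul_comm (3 ^ n) _, mul_assoc, ← mul_pow, ENNReal.mul_inv_cancel (by simp) (by simp),
        one_pow, mul_one]
    · simp [level_empty _ h]
  refine ⟨hα, Measure.ext_of_generateFrom_of_cover_subset (borel_eq_levels S.toNFCseq)
    (isPiSystem_levels _) subset_rfl (Set.countable_range _) ?_ ?_ ?_⟩
  · refine Set.eq_univ_of_forall fun x => ?_
    obtain ⟨n, hn⟩ := S.toNFCseq.exists_val x
    obtain ⟨v, hv⟩ := hn n le_rfl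
    exact ⟨_, ⟨(n, v), rfl⟩, hv⟩
  · rintro _ ⟨⟨n, j⟩, rfl⟩
    rcases Nat.lt_or_ge j (S.toNFCseq.hgt n) with h | h
    · show ν (S.toNFCseq.level n j) ≠ ⊤
      rw [hlev n j h]
      intro htop
      apply hα
      rw [hpow n, htop]
      exact ENNReal.mul_top (by simp)
    · simp [level_empty _ h]
  · rintro _ ⟨⟨n, j⟩, rfl⟩
    exact heq n j

/-- A box which is never visited by the orbit of a typical point is negligible. -/
theorem null_box (S : NFCX) {d : ℕ} {σ : Measure (S.toNFC.Xd d)} (hR : S.toNFC.IsRadon d σ)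
    {o : ℤ → S.toNFC.Xd d} (hto : S.IsTypicalOrbit d σ o) {n : ℕ} {B : Set (S.toNFC.Xd d)}
    (hB : S.toNFC.IsNBox d n B) (h : ∀ j, o j ∉ B) : σ B = 0 := by
  have hsub : B ⊆ S.toNFC.towerD d n := by
    obtain ⟨v, -, rfl⟩ := hB
    intro y hy i
    have := hy i
    simp only [NFCseq.level, Set.mem_ofPred_eq] at this
    simp [NFCseq.tower, this]
  rcases eq_or_ne (σ (S.toNFC.towerD d n)) 0 with h0 | h0
  · exact measure_mono_null hsub h0
  have ht := hto.2.1 0 n (pos_iff_ne_zero.2 h0) B hB (fun _ => 0) (fun k => k) (fun _ => le_rfl)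
    (fun k => by positivity) (by simpa using tendsto_natCast_atTop_atTop)
  simp only [h, Finset.filter_false, Finset.card_empty, Nat.cast_zero, zero_div] at ht
  have hz := tendsto_nhds_unique ht tendsto_const_nhds
  have hBfin : σ B ≠ ⊤ := ((measure_mono hsub).trans_lt (hR n)).ne
  rcases div_eq_zero_iff.1 hz with h1 | h1
  · exact ((ENNReal.toReal_eq_zero_iff _).1 h1).resolve_right hBfin
  · exact absurd h1 (ENNReal.toReal_pos h0 (hR n).ne).ne'

/-- If the coordinates of a typical point are on the same orbit, `σ` is a graph measure. -/
theorem graph_of_offsets (S : NFCX) {d : ℕ} {σ : Measure (S.toNFC.Xd d)} (hσ0 : σ ≠ 0)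
    (hR : S.toNFC.IsRadon d σ) (hinv : MeasurePreserving (S.toNFC.Td d) σ σ)
    {o : ℤ → S.toNFC.Xd d} (hto : S.IsTypicalOrbit d σ o) (i0 : Fin d) (E : Fin d → ℕ)
    (hE : ∀ j i, o j i = S.T^[E i] (o j i0)) : S.toNFC.IsGraphMeasure σ := by
  -- Almost every point lies in boxes visited by the orbit, hence on the graph.
  have hvis : ∀ᵐ y ∂σ, ∀ (n : ℕ) (v : Fin d → ℕ), (∀ i, (y i).1 n = some (v i)) →
      ∃ j, ∀ i, (o j i).1 n = some (v i) := by
    rw [ae_all_iff]; intro n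
    rw [ae_all_iff]; intro v
    by_cases hj : ∃ j, ∀ i, (o j i).1 n = some (v i)
    · exact Eventually.of_forall fun _ _ => hj
    by_cases hv : ∀ i, v i < S.toNFCseq.hgt n
    · have := null_box S hR hto (n := n) (B := {y | ∀ i, y i ∈ S.toNFCseq.level n (v i)})
        ⟨v, hv, rfl⟩ (fun j hjB => hj ⟨j, hjB⟩)
      filter_upwards [measure_eq_zero_iff_ae_notMem.1 this] with y hy hyv
      exact absurd hyv hy
    · refine Eventually.of_forall fun y hy => absurd (fun i => ?_) hv
      exact S.toNFCseq.val_lt (hy i)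
  have hgraph : ∀ᵐ y ∂σ, ∀ i, y i = S.T^[E i] (y i0) := by
    filter_upwards [hvis] with y hy i
    choose Nv hNv using fun i => S.toNFCseq.exists_val (y i)
    obtain ⟨N, hN⟩ := S.toNFC.iter_up (y i0) (E i)
    refine S.toNFCseq.ext_of_eventually (N := N + ∑ i, Nv i) fun m hm => ?_
    have hval : ∀ i, ∃ v, (y i).1 m = some v := fun i => hNv i m (by
      have := Finset.single_le_sum (f := Nv) (fun _ _ => Nat.zero_le _) (Finset.mem_univ i)
      omega)
    choose v hv using hval
    obtain ⟨j, hj⟩ := hy m v hv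
    obtain ⟨p, hp, hpE⟩ := hN m (by omega)
    rw [hv i0, Option.some.injEq] at hp
    subst hp
    have h1 := S.toNFC.iter_step (hj i0) (E i) (S.toNFCseq.val_lt hpE)
    rw [← hE j i] at h1
    rw [hpE, hv i, ← hj i, h1]
  have hev : Measurable fun y : S.toNFC.Xd d => y i0 := measurable_pi_apply i0
  set ν := σ.map fun y => y i0 with hνdef
  have hν : ∀ A, MeasurableSet A → ν (S.T ⁻¹' A) = ν A := by
    intro A hA
    rw [hνdef, Measure.map_apply hev (S.T_meas hA), Measure.map_apply hev hA,
      ← hinv.measure_preimage (hev hA).nullMeasurableSet]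
    rfl
  have hfin : ν (S.toNFCseq.level (∑ i, E i) 0) ≠ ⊤ := by
    rw [hνdef, Measure.map_apply hev (measurableSet_level _ _ _)]
    refine ((measure_mono_ae ?_).trans_lt (hR (∑ i, E i))).ne
    filter_upwards [hgraph] with y hy hy0 i
    have h1 : E i ≤ ∑ i, E i :=
      Finset.single_le_sum (fun _ _ => Nat.zero_le _) (Finset.mem_univ i)
    have h2 := S.toNFCseq.lt_hgt (∑ i, E i)
    show (y i).1 _ ≠ none
    rw [hy i, S.toNFC.iter_step (v := 0) hy0 (E i) (by omega)]
    simp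
  obtain ⟨hα, hνμ⟩ := S.toNFC.invariant_eq ν hν hfin
  refine ⟨ν (S.toNFCseq.level 0 0), pos_iff_ne_zero.2 fun h0 => hσ0 ?_, hα, fun i => E i,
    fun A hA => ?_⟩
  · rw [h0, zero_smul] at hνμ
    have := congrArg (fun m => m Set.univ) hνμ
    rw [hνdef] at this
    simpa [Measure.map_apply hev MeasurableSet.univ] using this
  · have hTm : ∀ k, Measurable S.T^[k] := fun k => S.T_meas.iterate k
    have hmeas : MeasurableSet (⋂ i, S.T^[E i] ⁻¹' A i) :=
      MeasurableSet.iInter fun i => hTm (E i) (hA i)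
    have h1 : σ (Set.univ.pi A) = ν (⋂ i, S.T^[E i] ⁻¹' A i) := by
      rw [hνdef, Measure.map_apply hev hmeas]
      refine measure_congr ?_
      filter_upwards [hgraph] with y hy
      apply propext
      show y ∈ Set.univ.pi A ↔ y i0 ∈ ⋂ i, S.T^[E i] ⁻¹' A i
      simp only [Set.mem_univ_pi, Set.mem_iInter, Set.mem_preimage, ← hy]
    rw [h1]
    exact congrArg (fun m => m (⋂ i, S.T^[E i] ⁻¹' A i)) hνμ

/-- Membership in `T^{-e} A`, for either sign of `e`, in terms of nonnegative powers of `T`. -/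
theorem exists_of_mem_preT (S : NFC) {e : ℤ} {A : Set S.toNFCseq.Xpt} {y : S.toNFCseq.Xpt}
    (h : y ∈ S.preT e A) : ∃ z ∈ A, ∃ a b : ℕ, (b : ℤ) - a = e ∧ S.T^[a] z = S.T^[b] y := by
  cases e with
  | ofNat k => exact ⟨_, h, 0, k, by simp, rfl⟩
  | negSucc k =>
    obtain ⟨z, hz, rfl⟩ := h
    exact ⟨z, hz, k + 1, 0, by rw [Int.negSucc_eq]; push_cast; ring, rfl⟩

/-- For a graph measure, the coordinates of a typical point are on the same orbit. -/
theorem offset_of_graph (S : NFCX) {d : ℕ} {σ : Measure (S.toNFC.Xd d)}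
    {o : ℤ → S.toNFC.Xd d} (ho : ∀ i, S.toNFC.IsOrbit fun j => o j i)
    (hto : S.IsTypicalOrbit d σ o) {α : ℝ≥0∞} {e : Fin d → ℤ}
    (h : ∀ A : Fin d → Set S.toNFCseq.Xpt, (∀ i, MeasurableSet (A i)) →
      σ (Set.univ.pi A) = α * S.μ (⋂ i, S.toNFC.preT (e i) (A i))) (i0 i : Fin d) :
    o 0 i = o (e i - e i0) i0 := by
  obtain ⟨N, hN⟩ := (ho i0).far 0 (e i - e i0)
  choose Nv hNv using fun i => S.toNFCseq.exists_val (o 0 i)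
  refine S.toNFCseq.ext_of_eventually (N := N + ∑ i, Nv i) fun m hm => ?_
  have hval : ∀ i, ∃ v, (o 0 i).1 m = some v := fun i => hNv i m (by
    have := Finset.single_le_sum (f := Nv) (fun _ _ => Nat.zero_le _) (Finset.mem_univ i)
    omega)
  choose v hv using hval
  obtain ⟨p, q, hp, hq, hpq⟩ := hN m (by omega)
  rw [hv i0, Option.some.injEq] at hp
  subst hp
  rw [hv i, hq]
  have hlt := S.toNFCseq.val_lt hq
  have hvlt := S.toNFCseq.val_lt (hv i)
  have hpos := hto.2.2.1 m {y | ∀ i, y i ∈ S.toNFCseq.level m (v i)}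
    ⟨v, fun i => S.toNFCseq.val_lt (hv i), rfl⟩ hv
  have hset : {y : S.toNFC.Xd d | ∀ i, y i ∈ S.toNFCseq.level m (v i)} =
      Set.univ.pi fun i => S.toNFCseq.level m (v i) := by
    ext y; simp
  rw [hset, h _ fun i => measurableSet_level _ _ _] at hpos
  obtain ⟨y, hy⟩ := nonempty_of_measure_ne_zero (right_ne_zero_of_mul hpos.ne')
  rw [Set.mem_iInter] at hy
  obtain ⟨z0, hz0, a0, b0, he0, ht0⟩ := S.toNFC.exists_of_mem_preT (hy i0)
  obtain ⟨z1, hz1, a1, b1, he1, ht1⟩ := S.toNFC.exists_of_mem_preT (hy i)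
  have hcomm : S.T^[a0 + b1] z0 = S.T^[a1 + b0] z1 := by
    rw [add_comm a0, add_comm a1, Function.iterate_add_apply, ht0,
      Function.iterate_add_apply _ b0, ht1, ← Function.iterate_add_apply,
      ← Function.iterate_add_apply, add_comm]
  congr 1
  rcases le_total (a0 + b1) (a1 + b0) with hle | hle
  · obtain ⟨k, hk⟩ := Nat.exists_eq_add_of_le hle
    rw [hk, Function.iterate_add_apply S.T (a0 + b1) k] at hcomm
    have hz := S.T_inj.iterate _ hcomm
    have hq' : v i0 = q + k := by omega
    have : z1.1 m = some q := S.toNFC.iter_back k (by rw [← hz, ← hq']; exact hz0)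
    have h2 : z1.1 m = some (v i) := hz1
    rw [this, Option.some.injEq] at h2
    exact h2.symm
  · obtain ⟨k, hk⟩ := Nat.exists_eq_add_of_le hle
    rw [hk, Function.iterate_add_apply S.T (a1 + b0) k] at hcomm
    have hz := S.T_inj.iterate _ hcomm
    have hq' : q = v i0 + k := by omega
    have := S.toNFC.iter_step (v := v i0) hz0 k (by omega)
    have h2 : z1.1 m = some (v i) := hz1
    rw [hz, h2, Option.some.injEq] at this
    omega

/-- When the coordinates are on the same orbit, a crossing longer than the offsets meets its
translates by these offsets, hence is synchronized. -/
theorem sync_of_offset (S : NFC) {d : ℕ} {o : ℤ → S.Xd d} {i0 : Fin d} {e : Fin d → ℤ}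
    (h : ∀ i j, o j i = o (j + e i) i0) {n : ℕ} {J : Finset ℤ} (hJ : S.IsCrossing d o n J)
    (hc : ∀ i, (e i).natAbs < J.card) : S.IsSync d o n J := by
  obtain ⟨⟨a, b, hab, rfl⟩, -, ht, -⟩ := hJ
  rw [Int.card_Icc] at hc
  suffices H : ∀ j ∈ Finset.Icc a b, ∀ i, S.toNFCseq.tcol n (o j i) =
      S.toNFCseq.tcol n (o j i0) from fun j hj i i' => by rw [H j hj i, H j hj i']
  intro j hj i
  have hi := hc i
  obtain ⟨j', hj', hj''⟩ : ∃ j' ∈ Finset.Icc a b, j' + e i ∈ Finset.Icc a b := by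
    simp only [Finset.mem_Icc]
    rcases le_total 0 (e i) with h0 | h0
    · exact ⟨a, by omega, by omega⟩
    · exact ⟨b, by omega, by omega⟩
  rw [ht i j hj j' hj', h i j', ht i0 _ hj'' j hj]

end NFC

/-- `σ` is a graph measure arising from powers of `T` iff for all large
enough `n`, all substantial `n`-crossings are synchronized. -/
theorem stmt13 (S : NFCX) (d : ℕ) (hd : 2 ≤ d) (η : ℝ) (hη0 : 0 < η)
    (hη1 : η < 1 / (100 * d))
    (σ : Measure (S.toNFC.Xd d)) (hσ0 : σ ≠ 0) (hR : S.toNFC.IsRadon d σ)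
    (herg : Ergodic (S.toNFC.Td d) σ)
    (hconull : σ {y : S.toNFC.Xd d | ¬ ∀ i, y i ∈ S.Xinf} = 0)
    (o : ℤ → S.toNFC.Xd d) (hto : S.IsTypicalOrbit d σ o) :
    S.toNFC.IsGraphMeasure σ ↔
      ∃ N : ℕ, ∀ n : ℕ, N ≤ n → ∀ J : Finset ℤ,
        S.toNFC.IsSubstantial d o η n J → S.toNFC.IsSync d o n J := by
  have ho : ∀ i, S.toNFC.IsOrbit fun j => o j i := fun i j => congrFun (hto.1 j) i
  constructor
  · rintro ⟨α, -, -, e, he⟩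
    let i0 : Fin d := ⟨0, by omega⟩
    have hoff : ∀ i j, o j i = o (j + (e i - e i0)) i0 := by
      intro i j
      have := (ho i).congr (ho i0) (NFC.offset_of_graph S ho hto he i0 i) j
      simpa [add_comm] using this
    -- Beyond this height, `η * h_n` exceeds all the offsets.
    obtain ⟨N, hN⟩ := exists_nat_gt ((∑ i, (e i - e i0).natAbs : ℕ) / η)
    refine ⟨N, fun n hn J hJ => S.toNFC.sync_of_offset hoff hJ.1 fun i => ?_⟩
    have h1 : (e i - e i0).natAbs ≤ ∑ i, (e i - e i0).natAbs :=
      Finset.single_le_sum (f := fun i => (e i - e i0).natAbs) (fun _ _ => Nat.zero_le _)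
        (Finset.mem_univ i)
    have h2 : (N : ℝ) ≤ S.toNFCseq.hgt n := by
      exact_mod_cast hn.trans (S.toNFCseq.lt_hgt n).le
    rw [div_lt_iff₀ hη0] at hN
    have h3 : ((∑ i, (e i - e i0).natAbs : ℕ) : ℝ) < (J ∩ Imid S.toNFCseq n).card := by
      nlinarith [hJ.2]
    have h4 : ∑ i, (e i - e i0).natAbs < (J ∩ Imid S.toNFCseq n).card := by exact_mod_cast h3
    exact h1.trans_lt (h4.trans_le (Finset.card_le_card Finset.inter_subset_left))
  · rintro ⟨N, H⟩
    obtain ⟨i0, E, hE⟩ := NFC.offsets_of_sync S hd hη1 ho hto.2.2.2 H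
    refine NFC.graph_of_offsets S hσ0 hR herg.toMeasurePreserving hto i0 E fun j i => ?_
    have h0 : o 0 i = o (E i) i0 := by rw [hE i, (ho i0).iter 0 (E i), zero_add]
    have := (ho i).congr (ho i0) h0 j
    rw [(ho i0).iter]
    simpa [add_comm] using this
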